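/- arXiv:1611.09965 — 2 statements merged into one kernel-verified Lean document; each statement's English description precedes it below -/
import Mathlib

section
/- Let X be an analytic subset of a complete separable metric space and s > 0. If the s-dimensional Hausdorff measure of X is positive (possibly infinite), then there exist a Borel measure μ on X with 0 < μ(X) < ∞ and a constant c > 0 such that μ(B(x,r)) ≤ c·r^s for all x ∈ X and all r > 0. -/
open scoped ENNReal NNReal
open MeasureTheory Metric Set

namespace Frost
open Filter Topology
set_option linter.unusedSectionVars false

variable {Z : Type*} [MetricSpace Z]

/-- enlargement of a set -/
def enl (S : Set Z) : Set Z := {x | ∃ y ∈ S, edist x y ≤ 2 * ediam S}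

lemma ediam_enl (S : Set Z) : ediam (enl S) ≤ 5 * ediam S := by
  apply ediam_le
  rintro x ⟨x', hx', hx⟩ y ⟨y', hy', hy⟩
  calc edist x y ≤ edist x x' + edist x' y' + edist y' y := edist_triangle4 _ _ _ _
    _ ≤ 2 * ediam S + ediam S + 2 * ediam S := by
        gcongr
        · exact edist_le_ediam_of_mem hx' hy'
        · rw [edist_comm]; exact hy
    _ = 5 * ediam S := by ring

lemma ediam_enl_rpow {s : ℝ} (hs : 0 < s) (S : Set Z) :
    ediam (enl S) ^ s ≤ 5 ^ s * ediam S ^ s := by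
  rw [← ENNReal.mul_rpow_of_nonneg _ _ hs.le]
  exact ENNReal.rpow_le_rpow (ediam_enl S) hs.le

lemma vitali {ι : Type*} (B : ι → Set Z) (R : ℝ≥0∞) (hR : R ≠ ⊤) (hB : ∀ a, ediam (B a) ≤ R)
    (T : Set ι) : ∃ u ⊆ T, u.PairwiseDisjoint B ∧ ∀ a ∈ T, ∀ x ∈ B a, ∃ b ∈ u, x ∈ enl (B b) := by
  have hfin : ∀ a, ediam (B a) ≠ ⊤ := fun a => ne_top_of_le_ne_top hR (hB a)
  obtain ⟨u, huT, hd, hu⟩ := Vitali.exists_disjoint_subfamily_covering_enlargement B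
    {a ∈ T | (B a).Nonempty} (fun a => (ediam (B a)).toReal) 2 (by norm_num)
    (fun a _ => ENNReal.toReal_nonneg) R.toReal
    (fun a _ => ENNReal.toReal_mono hR (hB a)) (fun a ha => ha.2)
  refine ⟨u, fun a ha => (huT ha).1, hd, fun a ha x hx => ?_⟩
  obtain ⟨b, hb, ⟨y, hya, hyb⟩, hle⟩ := hu a ⟨ha, x, hx⟩
  refine ⟨b, hb, y, hyb, ?_⟩
  calc edist x y ≤ ediam (B a) := edist_le_ediam_of_mem hx hya
    _ = ENNReal.ofReal (ediam (B a)).toReal := (ENNReal.ofReal_toReal (hfin a)).symm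
    _ ≤ ENNReal.ofReal (2 * (ediam (B b)).toReal) := ENNReal.ofReal_le_ofReal hle
    _ = 2 * ediam (B b) := by
        rw [ENNReal.ofReal_mul (by norm_num), ENNReal.ofReal_toReal (hfin b)]; simp

lemma multiplicity {ι : Type*} (B : ι → Set Z) (R : ℝ≥0∞) (hR : R ≠ ⊤)
    (hB : ∀ a, ediam (B a) ≤ R) (D : Set Z) (w : ι → ℝ≥0∞) (c : ℝ≥0∞)
    (hc : ∀ u : Set ι, (D ⊆ ⋃ a ∈ u, enl (B a)) → c ≤ ∑' a : u, w a) (m : ℕ) :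
    ∀ T : Set ι, (∀ x ∈ D, (m : ℕ∞) ≤ {a ∈ T | x ∈ B a}.encard) → m * c ≤ ∑' a : T, w a := by
  induction m with
  | zero => intro T _; simp
  | succ m ih =>
    intro T hT
    obtain ⟨u, huT, hd, hu⟩ := vitali B R hR hB T
    have h1 : c ≤ ∑' a : u, w a := by
      apply hc
      intro x hx
      have h := hT x hx
      have hne : {a ∈ T | x ∈ B a}.Nonempty := by
        rw [← Set.encard_pos]
        refine lt_of_lt_of_le ?_ h
        simp
      obtain ⟨a, ha, hxa⟩ := hne
      obtain ⟨b, hb, hxb⟩ := hu a ha x hxa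
      exact mem_biUnion hb hxb
    have h2 : m * c ≤ ∑' a : (T \ u : Set ι), w a := by
      apply ih
      intro x hx
      have h := hT x hx
      have hsub : {a ∈ T | x ∈ B a} ⊆ {a ∈ T \ u | x ∈ B a} ∪ {a ∈ u | x ∈ B a} := by
        intro a ha
        by_cases hau : a ∈ u
        · right; exact ⟨hau, ha.2⟩
        · left; exact ⟨⟨ha.1, hau⟩, ha.2⟩
      have hone : {a ∈ u | x ∈ B a}.encard ≤ 1 := by
        rw [Set.encard_le_one_iff]
        intro a b ha hb
        by_contra hab
        exact Set.disjoint_left.1 (hd ha.1 hb.1 hab) ha.2 hb.2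
      have h3 : ((m : ℕ∞) + 1) ≤ {a ∈ T \ u | x ∈ B a}.encard + 1 := by
        calc ((m : ℕ∞) + 1) = ((m + 1 : ℕ) : ℕ∞) := by push_cast; rfl
          _ ≤ _ := h
          _ ≤ _ := Set.encard_le_encard hsub
          _ ≤ _ := Set.encard_union_le _ _
          _ ≤ _ := by gcongr
      exact (ENat.add_le_add_iff_right (by simp)).1 h3
    calc ((m + 1 : ℕ) : ℝ≥0∞) * c = c + m * c := by push_cast; ring
      _ ≤ (∑' a : u, w a) + ∑' a : (T \ u : Set ι), w a := add_le_add h1 h2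
      _ = ∑' a : (u ∪ T \ u : Set ι), w a :=
          (ENNReal.summable.tsum_union_disjoint disjoint_sdiff_right ENNReal.summable).symm
      _ = ∑' a : T, w a := by rw [union_sdiff_cancel huT]

lemma zero_cost {s : ℝ} (hs : 0 < s) : ediam (∅ : Set Z) ^ s = 0 := by
  simp [hs]

/-- Hausdorff content -/
noncomputable def cont (Z : Type*) [MetricSpace Z] {s : ℝ} (hs : 0 < s) : OuterMeasure Z :=
  OuterMeasure.ofFunction (fun E => ediam E ^ s) (zero_cost hs)

lemma cont_le_tsum {s : ℝ} (hs : 0 < s) {A : Set Z} {ι : Type*} [Countable ι] (t : ι → Set Z)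
    (h : A ⊆ ⋃ i, t i) : cont Z hs A ≤ ∑' i, ediam (t i) ^ s := by
  calc cont Z hs A ≤ cont Z hs (⋃ i, t i) := measure_mono h
    _ ≤ ∑' i, cont Z hs (t i) := measure_iUnion_le _
    _ ≤ _ := ENNReal.tsum_le_tsum fun i => OuterMeasure.ofFunction_le _

lemma exists_cover {s : ℝ} (hs : 0 < s) {A : Set Z} {c : ℝ≥0∞} (h : cont Z hs A < c) :
    ∃ t : ℕ → Set Z, A ⊆ ⋃ i, t i ∧ ∑' i, ediam (t i) ^ s < c := by
  rw [cont, OuterMeasure.ofFunction_apply] at h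
  simp only [iInf_lt_iff] at h
  obtain ⟨t, ht, h⟩ := h
  exact ⟨t, ht, h⟩

variable [MeasurableSpace Z] [BorelSpace Z]

lemma cont_le_hausdorff {s : ℝ} (hs : 0 < s) (A : Set Z) : cont Z hs A ≤ μH[s] A := by
  rw [Measure.hausdorffMeasure_apply]
  refine le_iSup₂_of_le 1 one_pos ?_
  refine le_iInf fun t => le_iInf fun ht => le_iInf fun _ => ?_
  refine (cont_le_tsum hs t ht).trans (ENNReal.tsum_le_tsum fun i => ?_)
  rcases (t i).eq_empty_or_nonempty with h | h
  · simp [h, hs]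
  · simp [h]

lemma hausdorff_eq_zero {s : ℝ} (hs : 0 < s) {A : Set Z} (h : cont Z hs A = 0) :
    μH[s] A = 0 := by
  have h0 : ∀ n : ℕ, ∃ t : ℕ → Set Z, A ⊆ ⋃ i, t i ∧ ∑' i, ediam (t i) ^ s < ((n : ℝ≥0∞))⁻¹ := by
    intro n
    apply exists_cover hs
    rw [h]; simp
  choose t ht hc using h0
  have hlim : Tendsto (fun n : ℕ => ((n : ℝ≥0∞))⁻¹) atTop (𝓝 0) :=
    ENNReal.tendsto_inv_nat_nhds_zero
  have hr : Tendsto (fun n : ℕ => (((n : ℝ≥0∞))⁻¹) ^ (1 / s)) atTop (𝓝 0) := by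
    have := (ENNReal.continuous_rpow_const (y := 1 / s)).continuousAt.tendsto.comp hlim
    simpa [Function.comp_def, hs] using this
  have := Measure.hausdorffMeasure_le_liminf_tsum (ι := fun _ : ℕ => ℕ) s A (l := atTop) _ hr t
    (Eventually.of_forall fun n i => by
      rw [one_div, ENNReal.le_rpow_inv_iff hs]
      exact (ENNReal.le_tsum i).trans (hc n).le) (Eventually.of_forall ht)
  have h2 : liminf (fun n => ∑' i, ediam (t n i) ^ s) atTop = 0 := by
    apply Tendsto.liminf_eq
    exact tendsto_of_tendsto_of_tendsto_of_le_of_le tendsto_const_nhds hlim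
      (fun _ => zero_le) (fun n => (hc n).le)
  rw [h2] at this
  exact le_antisymm this zero_le

lemma sort_cover {s : ℝ} (t : ℕ → Set Z) (M : ℝ≥0∞) (hM : M ≠ ⊤)
    (hs : 0 < s) (h : ∑' i, ediam (t i) ^ s ≤ M) :
    ∃ t' : ℕ → Set Z, (⋃ i, t i) ⊆ (⋃ i, t' i) ∧ ∑' i, ediam (t' i) ^ s ≤ M ∧
      ∀ i : ℕ, ((i + 1 : ℕ) : ℝ≥0∞) * ediam (t' i) ^ s ≤ M + 2 := by
  classical
  let a : ℕ → ℝ≥0∞ := fun i => ediam (t i) ^ s + 2⁻¹ ^ i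
  have hpos : ∀ i, a i ≠ 0 := by
    intro i
    simp only [a, ne_eq, add_eq_zero, not_and]
    intro _
    simp
  have hsum : ∑' i, a i ≤ M + 2 := by
    simp only [a]
    rw [ENNReal.tsum_add]
    gcongr
    rw [ENNReal.tsum_geometric]
    simp
  have hsum' : ∑' i, a i ≠ ⊤ := ne_top_of_le_ne_top (by simp [hM]) hsum
  let S : ℕ → Set ℕ := fun i => {j | a i < a j ∨ (a i = a j ∧ j < i)}
  have hS' : ∀ i, {j | a i ≤ a j}.Finite := fun i =>
    ENNReal.finite_const_le_of_tsum_ne_top hsum' (hpos i)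
  have hSsub : ∀ i, S i ⊆ {j | a i ≤ a j} := by
    intro i j hj
    rcases hj with hj | hj
    · exact hj.le
    · exact hj.1.le
  have hS : ∀ i, (S i).Finite := fun i => (hS' i).subset (hSsub i)
  let rk : ℕ → ℕ := fun i => (hS i).toFinset.card
  have hnot : ∀ i, i ∉ S i := by intro i hi; rcases hi with hi | hi <;> simp at hi
  have hlt : ∀ i j, i ∈ S j → rk i < rk j := by
    intro i j hij
    apply Finset.card_lt_card
    rw [Finset.ssubset_iff_of_subset]
    · exact ⟨i, by simpa using hij, by simpa using hnot i⟩
    · intro k hk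
      simp only [Finite.mem_toFinset] at hk ⊢
      rcases hij with hij | hij <;> rcases hk with hk | hk
      · left; exact hij.trans hk
      · left; rw [← hk.1]; exact hij
      · left; rw [hij.1]; exact hk
      · right; exact ⟨hij.1.trans hk.1, hk.2.trans hij.2⟩
  have hinj : Function.Injective rk := by
    intro i j hij
    by_contra hne
    have : i ∈ S j ∨ j ∈ S i := by
      rcases lt_trichotomy (a i) (a j) with h1 | h1 | h1
      · right; left; exact h1
      · rcases lt_or_gt_of_ne hne with h2 | h2
        · left; right; exact ⟨h1.symm, h2⟩
        · right; right; exact ⟨h1, h2⟩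
      · left; left; exact h1
    rcases this with h1 | h1
    · exact absurd hij (hlt _ _ h1).ne
    · exact absurd hij (hlt _ _ h1).ne'
  have hext : ∀ i, Function.extend rk t (fun _ => ∅) (rk i) = t i := fun i => hinj.extend_apply _ _ i
  have hext' : ∀ m, m ∉ range rk → Function.extend rk t (fun _ => ∅) m = ∅ := fun m hm =>
    Function.extend_apply' _ _ _ (by simpa using hm)
  refine ⟨Function.extend rk t (fun _ => ∅), ?_, ?_, ?_⟩
  · apply iUnion_subset
    intro i
    rw [← hext i]
    exact subset_iUnion (Function.extend rk t (fun _ => ∅)) (rk i)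
  · rw [← hinj.tsum_eq]
    · simpa only [hext] using h
    · intro m hm
      by_contra hmm
      apply hm
      simp [hext' m hmm, hs]
  · intro m
    by_cases hm : m ∈ range rk
    · obtain ⟨i, rfl⟩ := hm
      rw [hext]
      calc ((rk i + 1 : ℕ) : ℝ≥0∞) * ediam (t i) ^ s ≤ ((rk i + 1 : ℕ) : ℝ≥0∞) * a i := by
            gcongr; exact le_self_add
        _ = ∑ j ∈ insert i (hS i).toFinset, a i := by
            rw [Finset.sum_const, Finset.card_insert_of_notMem (by simpa using hnot i)]
            simp [rk]
        _ ≤ ∑ j ∈ insert i (hS i).toFinset, a j := by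
            apply Finset.sum_le_sum
            intro j hj
            simp only [Finset.mem_insert, Finite.mem_toFinset] at hj
            rcases hj with rfl | hj
            · exact le_rfl
            · exact hSsub i hj
        _ ≤ ∑' j, a j := ENNReal.sum_le_tsum _
        _ ≤ M + 2 := hsum
    · simp [hext' m hm, hs]

lemma capacity (f : (ℕ → ℕ) → Z) (φ : Set Z → ℝ≥0∞) (c : ℝ≥0∞)
    (hinc : ∀ A : ℕ → Set Z, Monotone A → (∀ n, A n ⊆ range f) → c < φ (⋃ n, A n) →
      ∃ n, c < φ (A n)) (h : c < φ (range f)) :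
    ∃ k : ℕ → ℕ, ∀ j, c < φ (f '' {x | ∀ i < j, x i ≤ k i}) := by
  classical
  have step : ∀ (j : ℕ) (k : ℕ → ℕ), c < φ (f '' {x | ∀ i < j, x i ≤ k i}) →
      ∃ n, c < φ (f '' {x | ∀ i < j + 1, x i ≤ Function.update k j n i}) := by
    intro j k hk
    have hset : ∀ n, {x : ℕ → ℕ | ∀ i < j + 1, x i ≤ Function.update k j n i} =
        {x | (∀ i < j, x i ≤ k i) ∧ x j ≤ n} := by
      intro n
      ext x
      simp only [mem_setOf_eq]
      constructor
      · intro hx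
        refine ⟨fun i hi => ?_, ?_⟩
        · have := hx i (by omega)
          rwa [Function.update_of_ne (by omega)] at this
        · simpa using hx j (by omega)
      · rintro ⟨hx, hxj⟩ i hi
        rcases Nat.lt_succ_iff_lt_or_eq.1 hi with h1 | rfl
        · rw [Function.update_of_ne (by omega)]; exact hx i h1
        · simpa using hxj
    simp only [hset]
    apply hinc (fun n => f '' {x | (∀ i < j, x i ≤ k i) ∧ x j ≤ n})
    · intro n m hnm
      apply image_mono
      rintro x ⟨h1, h2⟩
      exact ⟨h1, h2.trans hnm⟩
    · intro n; exact image_subset_range _ _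
    · rw [← image_iUnion]
      convert hk using 4
      ext x
      simp only [mem_iUnion, mem_setOf_eq]
      exact ⟨fun ⟨n, hn⟩ => hn.1, fun hx => ⟨x j, hx, le_rfl⟩⟩
  let g : (j : ℕ) → {k : ℕ → ℕ // c < φ (f '' {x | ∀ i < j, x i ≤ k i})} := fun j =>
    Nat.rec ⟨fun _ => 0, by simpa using h⟩
      (fun j k => ⟨Function.update k.1 j (step j k.1 k.2).choose, (step j k.1 k.2).choose_spec⟩) j
  have hg : ∀ j, ∃ n, (g (j + 1)).1 = Function.update (g j).1 j n := fun j => ⟨_, rfl⟩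
  have hst : ∀ i j, i < j → (g j).1 i = (g (i + 1)).1 i := by
    intro i j hij
    induction j with
    | zero => omega
    | succ j ih =>
      rcases Nat.lt_succ_iff_lt_or_eq.1 hij with h1 | rfl
      · obtain ⟨n, hn⟩ := hg j
        rw [hn, Function.update_of_ne (by omega)]
        exact ih h1
      · rfl
  refine ⟨fun i => (g (i + 1)).1 i, fun j => ?_⟩
  have := (g j).2
  convert this using 4
  ext x
  simp only [mem_setOf_eq]
  exact forall₂_congr fun i hi => by rw [hst i j hi]

lemma compact_box (k : ℕ → ℕ) : IsCompact {x : ℕ → ℕ | ∀ i, x i ≤ k i} := by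
  have : {x : ℕ → ℕ | ∀ i, x i ≤ k i} = Set.pi univ (fun i => Iic (k i)) := by
    ext x; simp [Pi.le_def]
  rw [this]
  exact isCompact_univ_pi fun i => (finite_Iic _).isCompact

lemma box_open (f : (ℕ → ℕ) → Z) (hf : Continuous f) (k : ℕ → ℕ) (W : Set Z) (hW : IsOpen W)
    (h : f '' {x | ∀ i, x i ≤ k i} ⊆ W) : ∃ j, f '' {x | ∀ i < j, x i ≤ k i} ⊆ W := by
  have hO : IsOpen (f ⁻¹' W) := hW.preimage hf
  have hcyl : ∀ x ∈ {x : ℕ → ℕ | ∀ i, x i ≤ k i}, ∃ J : ℕ, PiNat.cylinder x J ⊆ f ⁻¹' W := by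
    intro x hx
    have hx' : f ⁻¹' W ∈ 𝓝 x := hO.mem_nhds (h ⟨x, hx, rfl⟩)
    obtain ⟨v, ⟨y, J, rfl⟩, hxv, hv⟩ := (PiNat.isTopologicalBasis_cylinders
      (fun _ : ℕ => ℕ)).mem_nhds_iff.1 hx'
    exact ⟨J, by rwa [PiNat.mem_cylinder_iff_eq.1 hxv]⟩
  choose! J hJ using hcyl
  obtain ⟨F, hF, hcov⟩ := (compact_box k).elim_nhds_subcover (fun x => PiNat.cylinder x (J x))
    (fun x _ => (PiNat.isOpen_cylinder _ x _).mem_nhds (PiNat.self_mem_cylinder x _))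
  refine ⟨F.sup J, ?_⟩
  rintro _ ⟨y, hy, rfl⟩
  have hy' : (fun i => min (y i) (k i)) ∈ {x : ℕ → ℕ | ∀ i, x i ≤ k i} := fun i => min_le_right _ _
  obtain ⟨x, hxF, hx⟩ := mem_iUnion₂.1 (hcov hy')
  apply hJ x (hF x hxF)
  intro i hi
  rw [← hx i hi]
  exact (min_eq_left (hy i (lt_of_lt_of_le hi (Finset.le_sup hxF)))).symm

lemma open_enl {s : ℝ} (hs : 0 < s) (E : Set Z) (δ : ℝ≥0∞) (hδ : 0 < δ) :
    ∃ U, IsOpen U ∧ E ⊆ U ∧ ediam U ^ s ≤ ediam E ^ s + δ := by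
  by_cases hE : ediam E = ⊤
  · exact ⟨univ, isOpen_univ, subset_univ _, by simp [hE, hs]⟩
  have hlim : Tendsto (fun ε : ℝ≥0 => (ediam E + 2 * (ε : ℝ≥0∞)) ^ s) (𝓝 0)
      (𝓝 ((ediam E + 2 * ((0 : ℝ≥0) : ℝ≥0∞)) ^ s)) := by
    apply Continuous.tendsto (f := fun ε : ℝ≥0 => (ediam E + 2 * (ε : ℝ≥0∞)) ^ s)
    have h1 : Continuous (fun ε : ℝ≥0 => ediam E + 2 * (ε : ℝ≥0∞)) := by
      refine continuous_const.add ?_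
      exact (ENNReal.continuous_const_mul (by simp)).comp ENNReal.continuous_coe
    exact (ENNReal.continuous_rpow_const).comp h1
  simp only [ENNReal.coe_zero, mul_zero, add_zero] at hlim
  have hlt : ediam E ^ s < ediam E ^ s + δ :=
    ENNReal.lt_add_right (ENNReal.rpow_ne_top_of_nonneg hs.le hE) hδ.ne'
  have hev : ∀ᶠ ε : ℝ≥0 in 𝓝 0, (ediam E + 2 * (ε : ℝ≥0∞)) ^ s < ediam E ^ s + δ :=
    hlim.eventually (eventually_lt_nhds hlt)
  have hev2 : ∀ᶠ ε : ℝ≥0 in 𝓝[>] 0, (ediam E + 2 * (ε : ℝ≥0∞)) ^ s < ediam E ^ s + δ :=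
    hev.filter_mono nhdsWithin_le_nhds
  obtain ⟨ε, hε, hεpos⟩ := (hev2.and self_mem_nhdsWithin).exists
  refine ⟨Metric.thickening ε E, Metric.isOpen_thickening,
    Metric.self_subset_thickening (by exact_mod_cast hεpos) _, ?_⟩
  exact (ENNReal.rpow_le_rpow (Metric.ediam_thickening_le ε) hs.le).trans hε.le

lemma cont_open {s : ℝ} (hs : 0 < s) {K : Set Z} {c : ℝ≥0∞} (h : cont Z hs K < c) :
    ∃ W, IsOpen W ∧ K ⊆ W ∧ cont Z hs W < c := by
  obtain ⟨t, ht, hc⟩ := exists_cover hs h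
  obtain ⟨δ, hδ, hδ2⟩ := ENNReal.exists_pos_sum_of_countable' (tsub_pos_of_lt hc).ne' ℕ
  choose U hU hEU hd using fun i => open_enl hs (t i) (δ i) (hδ i)
  refine ⟨⋃ i, U i, isOpen_iUnion hU, ht.trans (iUnion_mono hEU), ?_⟩
  calc cont Z hs (⋃ i, U i) ≤ ∑' i, ediam (U i) ^ s := cont_le_tsum hs U subset_rfl
    _ ≤ ∑' i, (ediam (t i) ^ s + δ i) := ENNReal.tsum_le_tsum hd
    _ = ∑' i, ediam (t i) ^ s + ∑' i, δ i := ENNReal.tsum_add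
    _ < ∑' i, ediam (t i) ^ s + (c - ∑' i, ediam (t i) ^ s) := by
        exact ENNReal.add_lt_add_left hc.ne_top hδ2
    _ = c := add_tsub_cancel_of_le hc.le

lemma cont_le_ediam {s : ℝ} (hs : 0 < s) (A : Set Z) : cont Z hs A ≤ ediam A ^ s := by
  have := cont_le_tsum hs (A := A) (fun _ : Unit => A) (fun x hx => mem_iUnion.2 ⟨(), hx⟩)
  simpa using this

lemma ediam_limit (U : Ultrafilter ℕ) (t : ℕ → Set Z) (d : ℝ≥0∞)
    (hd : Tendsto (fun n => ediam (t n)) U (𝓝 d)) :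
    ediam {x | ∀ V ∈ 𝓝 x, ∀ᶠ n in U, (V ∩ t n).Nonempty} ≤ d := by
  apply Metric.ediam_le
  intro x hx y hy
  apply le_of_forall_gt
  intro r hr
  obtain ⟨r', hr1, hr2⟩ := exists_between hr
  obtain ⟨ε, hε, hε2⟩ : ∃ ε : ℝ≥0∞, 0 < ε ∧ r' + 2 * ε ≤ r := by
    refine ⟨(r - r') / 2, ?_, ?_⟩
    · exact ENNReal.div_pos (tsub_pos_of_lt hr2).ne' (by simp)
    · rw [ENNReal.mul_div_cancel (by simp) (by simp), add_tsub_cancel_of_le hr2.le]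
  have h1 := hx _ (Metric.eball_mem_nhds x hε)
  have h2 := hy _ (Metric.eball_mem_nhds y hε)
  have h3 : ∀ᶠ n in U, ediam (t n) < r' := hd.eventually (eventually_lt_nhds hr1)
  obtain ⟨n, ⟨a, ha1, ha2⟩, ⟨b, hb1, hb2⟩, hn⟩ := (h1.and (h2.and h3)).exists
  rw [Metric.mem_eball] at ha1 hb1
  have hab : edist a b < r' := (Metric.edist_le_ediam_of_mem ha2 hb2).trans_lt hn
  calc edist x y ≤ edist x a + edist a b + edist b y := edist_triangle4 _ _ _ _
    _ < ε + r' + ε := by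
        rw [edist_comm x a]
        exact ENNReal.add_lt_add (ENNReal.add_lt_add ha1 hab) hb1
    _ = r' + 2 * ε := by ring
    _ ≤ r := hε2

lemma residual {s : ℝ} (hs : 0 < s) (M : ℝ≥0∞) (hM : M ≠ ⊤) (u : ℕ → ℕ → Set Z) (D : Set Z)
    (hcov : ∃ L, ∀ l ≥ L, D ⊆ ⋃ i, u l i)
    (hsum : ∀ l, ∑' i, ediam (u l i) ^ s ≤ M)
    (hsort : ∀ l i : ℕ, ((i + 1 : ℕ) : ℝ≥0∞) * ediam (u l i) ^ s ≤ M)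
    (hdisj : ∀ i, ∃ L, ∀ l ≥ L, ∀ l' ≥ L, l ≠ l' → ∀ x ∈ D, x ∈ u l i → x ∉ u l' i) :
    μH[s] D < ⊤ := by
  classical
  obtain ⟨L0, hL0⟩ := hcov
  choose Li hLi using hdisj
  let G : ℕ → ℝ≥0∞ := fun q => (M / ((q + 1 : ℕ) : ℝ≥0∞)) ^ (1 / s)
  have hGtop : ∀ q, G q ≠ ⊤ := by
    intro q
    apply ENNReal.rpow_ne_top_of_nonneg (by positivity)
    exact ENNReal.div_ne_top hM (by simp)
  have hG : ∀ l i q, q ≤ i → ediam (u l i) ≤ G q := by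
    intro l i q hq
    have h1 : ediam (u l i) ^ s ≤ M / ((q + 1 : ℕ) : ℝ≥0∞) := by
      rw [ENNReal.le_div_iff_mul_le (by simp) (by simp), mul_comm]
      refine le_trans ?_ (hsort l i)
      gcongr
    calc ediam (u l i) = (ediam (u l i) ^ s) ^ (1 / s) := by
          rw [← ENNReal.rpow_mul, mul_one_div_cancel hs.ne', ENNReal.rpow_one]
      _ ≤ G q := ENNReal.rpow_le_rpow h1 (by positivity)
  have hGlim : Tendsto (fun q => 5 * G q) atTop (𝓝 0) := by
    have h1 : Tendsto (fun q : ℕ => M / ((q + 1 : ℕ) : ℝ≥0∞)) atTop (𝓝 0) := by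
      have := (ENNReal.Tendsto.const_div (a := M) ENNReal.tendsto_nat_nhds_top (Or.inr hM))
      simp only [ENNReal.div_top] at this
      exact this.comp (tendsto_add_atTop_nat 1)
    have h2 : Tendsto G atTop (𝓝 0) := by
      have := (ENNReal.continuous_rpow_const (y := 1 / s)).tendsto 0
      rw [ENNReal.zero_rpow_of_pos (by positivity)] at this
      exact this.comp h1
    have := ENNReal.Tendsto.const_mul (a := 5) h2 (Or.inr (by simp))
    simpa using this
  have key : ∀ q : ℕ, ∃ v : Set (Fin (2 * (q+1)) × ℕ), ∃ B : Fin (2 * (q+1)) × ℕ → Set Z,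
      (∀ a, ediam (B a) ≤ G q) ∧ D ⊆ ⋃ a ∈ v, enl (B a) ∧
      ∑' a : v, ediam (B a) ^ s ≤ 2 * M + 1 := by
    intro q
    let L := max L0 ((Finset.range (q+1)).sup Li)
    let B : Fin (2 * (q+1)) × ℕ → Set Z := fun a => u (L + a.1) (a.2 + (q+1))
    have hB : ∀ a, ediam (B a) ≤ G q := fun a => hG _ _ _ (by omega)
    by_contra hcon
    push Not at hcon
    have hm := multiplicity B (G q) (hGtop q) hB D (fun a => ediam (B a) ^ s) (2 * M + 1)
      (fun v hv => (hcon v B hB hv).le) (q + 1) univ (by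
        intro x hx
        have h1 : ∀ l : Fin (2 * (q+1)), ∃ i, x ∈ u (L + l) i := fun l =>
          mem_iUnion.1 (hL0 (L + l) (le_trans (le_max_left _ _) (Nat.le_add_right _ _)) hx)
        choose i hi using h1
        let S : Finset (Fin (2 * (q+1))) := Finset.univ.filter (fun l => i l < q + 1)
        have hS : S.card ≤ q + 1 := by
          refine le_trans (Finset.card_le_card_of_injOn (t := Finset.range (q+1)) i ?_ ?_)
            (Finset.card_range (q+1)).le
          · intro l hl
            simpa [S] using hl
          · intro l hl l' hl' hll
            by_contra hne
            have hlq : i l < q + 1 := by simpa [S] using hl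
            have hLL : Li (i l) ≤ L := le_trans
              (Finset.le_sup (f := Li) (Finset.mem_range.2 hlq)) (le_max_right _ _)
            refine hLi (i l) (L + l) (by omega) (L + l') (by omega) ?_ x hx (hi l) ?_
            · intro h; apply hne; ext; omega
            · rw [hll]; exact hi l'
        have hSc : q + 1 ≤ Sᶜ.card := by
          rw [Finset.card_compl, Fintype.card_fin]; omega
        let T : Finset (Fin (2 * (q+1)) × ℕ) := Sᶜ.image (fun l => (l, i l - (q+1)))
        have hT : T.card = Sᶜ.card := by
          apply Finset.card_image_of_injOn
          intro a _ b _ hab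
          exact congrArg Prod.fst hab
        calc ((q + 1 : ℕ) : ℕ∞) ≤ (T.card : ℕ∞) := by rw [hT]; exact_mod_cast hSc
          _ = (T : Set (Fin (2 * (q+1)) × ℕ)).encard := (Set.encard_coe_eq_coe_finsetCard T).symm
          _ ≤ _ := by
            apply Set.encard_le_encard
            intro a ha
            simp only [T, Finset.coe_image, mem_image, Finset.mem_coe] at ha
            obtain ⟨l, hl, rfl⟩ := ha
            refine ⟨mem_univ _, ?_⟩
            have hl' : q + 1 ≤ i l := by simpa [S] using hl
            simp only [B]
            rw [Nat.sub_add_cancel hl']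
            exact hi l)
    have hle : ∑' a : (univ : Set (Fin (2 * (q+1)) × ℕ)), ediam (B a) ^ s
        ≤ (2 * (q + 1) : ℕ) * M := by
      rw [tsum_univ (fun a => ediam (B a) ^ s), 
        ENNReal.tsum_prod (f := fun l k => ediam (B (l, k)) ^ s), tsum_fintype]
      calc ∑ l : Fin (2 * (q+1)), ∑' k, ediam (B (l, k)) ^ s
          ≤ ∑ l : Fin (2 * (q+1)), M := by
            apply Finset.sum_le_sum
            intro l _
            refine le_trans ?_ (hsum (L + l))
            exact ENNReal.tsum_comp_le_tsum_of_injective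
              (add_left_injective (q+1)) (fun k => ediam (u (L + l) k) ^ s)
        _ = _ := by simp
    have := hm.trans hle
    have h2 : ((q + 1 : ℕ) : ℝ≥0∞) * (2 * M + 1) ≤ ((q + 1 : ℕ) : ℝ≥0∞) * (2 * M) := by
      refine this.trans (le_of_eq ?_)
      push_cast; ring
    rw [ENNReal.mul_le_mul_iff_right (by simp) (by simp)] at h2
    have h3 : 2 * M ≠ ⊤ := ENNReal.mul_ne_top (by simp) hM
    exact absurd h2 (not_le.2 (ENNReal.lt_add_right h3 (by simp)))
  choose v B hB hDv hs' using key
  have hfin : μH[s] D ≤ 5 ^ s * (2 * M + 1) := by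
    refine (Measure.hausdorffMeasure_le_liminf_tsum s D (l := atTop) (fun q => 5 * G q) hGlim
      (fun q (a : v q) => enl (B q a)) (Eventually.of_forall fun q a => ?_)
      (Eventually.of_forall fun q => ?_)).trans ?_
    · exact (ediam_enl _).trans (by gcongr; exact hB q a)
    · intro x hx
      obtain ⟨a, ha, hxa⟩ := mem_iUnion₂.1 (hDv q hx)
      exact mem_iUnion.2 ⟨⟨a, ha⟩, hxa⟩
    · refine liminf_le_of_le (by isBoundedDefault) ?_
      intro b hb
      obtain ⟨q, hq⟩ := hb.exists
      refine hq.trans ?_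
      calc ∑' a : v q, ediam (enl (B q a)) ^ s ≤ ∑' a : v q, 5 ^ s * ediam (B q a) ^ s :=
            ENNReal.tsum_le_tsum fun a => ediam_enl_rpow hs _
        _ = 5 ^ s * ∑' a : v q, ediam (B q a) ^ s := ENNReal.tsum_mul_left
        _ ≤ _ := by gcongr; exact hs' q
  refine hfin.trans_lt ?_
  apply ENNReal.mul_lt_top
  · exact ENNReal.rpow_lt_top_of_nonneg hs.le (by simp)
  · exact ENNReal.add_lt_top.2 ⟨ENNReal.mul_lt_top (by simp) hM.lt_top, by simp⟩

lemma exists_radius {s : ℝ} (hs : 0 < s) (d δ : ℝ≥0∞) (hd : d ≠ ⊤) (hδ : 0 < δ) :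
    ∃ r, d < r ∧ r ^ s = d ^ s + δ := by
  refine ⟨(d ^ s + δ) ^ (1 / s), ?_, ?_⟩
  · calc d = (d ^ s) ^ (1 / s) := by
          rw [← ENNReal.rpow_mul, mul_one_div_cancel hs.ne', ENNReal.rpow_one]
      _ < _ := by
        apply ENNReal.rpow_lt_rpow _ (by positivity)
        exact ENNReal.lt_add_right (ENNReal.rpow_ne_top_of_nonneg hs.le hd) hδ.ne'
  · rw [← ENNReal.rpow_mul, one_div_mul_cancel hs.ne', ENNReal.rpow_one]

lemma exists_subseq (U : Ultrafilter ℕ) (P : ℕ → ℕ → Prop) (R : ℕ → ℕ → ℕ → Prop)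
    (hP : ∀ j, ∀ᶠ n in U, P j n) (hR : ∀ j m, P j m → ∀ᶠ n in U, R j m n)
    (hPm : ∀ i j n, i ≤ j → P j n → P i n)
    (hRm : ∀ i j m n, i ≤ j → R j m n → R i m n) :
    ∃ f : ℕ → ℕ, (∀ l, P l (f l)) ∧ ∀ l l', l < l' → R l (f l) (f l') := by
  classical
  obtain ⟨f, hf, hf'⟩ := exists_seq_of_forall_finset_exists
    (fun a : ℕ × ℕ => P a.1 a.2) (fun a b => a.1 < b.1 ∧ R a.1 a.2 b.2) (by
      intro S hS
      have h1 : ∀ᶠ n in (U : Filter ℕ), ∀ a ∈ S, R a.1 a.2 n :=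
        (Filter.eventually_all_finset S).2 fun a ha => hR _ _ (hS a ha)
      obtain ⟨n, hn1, hn2⟩ := (h1.and (hP (S.sup Prod.fst + 1))).exists
      refine ⟨(S.sup Prod.fst + 1, n), hn2, fun a ha => ⟨?_, hn1 a ha⟩⟩
      exact Nat.lt_succ_of_le (Finset.le_sup (f := Prod.fst) ha))
  have hmono : StrictMono (fun l => (f l).1) := fun a b hab => (hf' a b hab).1
  refine ⟨fun l => (f l).2, fun l => hPm _ _ _ (hmono.id_le l) (hf l), fun l l' h => ?_⟩
  exact hRm _ _ _ _ (hmono.id_le l) (hf' l l' h).2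

lemma increasing [SecondCountableTopology Z] {s : ℝ} (hs : 0 < s) (X : Set Z)
    (h0 : ∀ S ⊆ X, μH[s] S < ⊤ → μH[s] S = 0) (A : ℕ → Set Z) (hA : Monotone A)
    (hAX : ∀ n, A n ⊆ X) (M : ℝ≥0∞) (hM : M ≠ ⊤) (h : ∀ n, cont Z hs (A n) ≤ M) :
    cont Z hs (⋃ n, A n) ≤ M := by
  classical
  -- the covers
  have hcovers : ∀ n : ℕ, ∃ t : ℕ → Set Z, A n ⊆ (⋃ i, t i) ∧
      ∑' i, ediam (t i) ^ s ≤ M + ((n + 1 : ℕ) : ℝ≥0∞)⁻¹ ∧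
      ∀ i : ℕ, ((i + 1 : ℕ) : ℝ≥0∞) * ediam (t i) ^ s ≤ M + 3 := by
    intro n
    have hlt : cont Z hs (A n) < M + ((n + 1 : ℕ) : ℝ≥0∞)⁻¹ :=
      (h n).trans_lt (ENNReal.lt_add_right hM (by simp))
    obtain ⟨t, ht, hc⟩ := exists_cover hs hlt
    have hinv : ((n + 1 : ℕ) : ℝ≥0∞)⁻¹ ≤ 1 := by
      rw [ENNReal.inv_le_one]; exact_mod_cast Nat.le_add_left 1 n
    obtain ⟨t', h1, h2, h3⟩ := sort_cover t _ (by
      exact ENNReal.add_ne_top.2 ⟨hM, ne_top_of_le_ne_top (by simp) hinv⟩) hs hc.le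
    refine ⟨t', ht.trans h1, h2, fun i => (h3 i).trans ?_⟩
    calc M + ((n + 1 : ℕ) : ℝ≥0∞)⁻¹ + 2 ≤ M + 1 + 2 := by gcongr
      _ = M + 3 := by rw [add_assoc]; norm_num
  choose t ht hsum hsort using hcovers
  let U : Ultrafilter ℕ := hyperfilter ℕ
  have hU : (U : Filter ℕ) ≤ atTop := by
    rw [← Nat.cofinite_eq_atTop]; exact hyperfilter_le_cofinite
  have hlim : ∀ i, ∃ d, Tendsto (fun n => ediam (t n i)) U (𝓝 d) := by
    intro i
    obtain ⟨d, -, hd⟩ := isCompact_univ.ultrafilter_le_nhds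
      (U.map (fun n => ediam (t n i))) (by simp)
    exact ⟨d, hd⟩
  choose d hd using hlim
  have hdsum : ∑' i, d i ^ s ≤ M := by
    rw [ENNReal.tsum_eq_iSup_sum]
    refine iSup_le fun F => ?_
    have h1 : Tendsto (fun n => ∑ i ∈ F, ediam (t n i) ^ s) U (𝓝 (∑ i ∈ F, d i ^ s)) :=
      tendsto_finsetSum F fun i _ =>
        ((ENNReal.continuous_rpow_const (y := s)).tendsto (d i)).comp (hd i)
    have h2 : Tendsto (fun n : ℕ => M + ((n + 1 : ℕ) : ℝ≥0∞)⁻¹) U (𝓝 (M + 0)) := by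
      apply Tendsto.mono_left _ hU
      exact tendsto_const_nhds.add
        (ENNReal.tendsto_inv_nat_nhds_zero.comp (tendsto_add_atTop_nat 1))
    rw [add_zero] at h2
    exact le_of_tendsto_of_tendsto' h1 h2 fun n =>
      (ENNReal.sum_le_tsum F).trans (hsum n)
  have hdtop : ∀ i, d i ≠ ⊤ := by
    intro i hi
    have : d i ^ s ≤ M := (ENNReal.le_tsum i).trans hdsum
    rw [hi, ENNReal.top_rpow_of_pos hs] at this
    exact hM (top_le_iff.1 this)
  -- it suffices to prove an approximate inequality
  suffices key : ∀ ε : ℝ≥0∞, 0 < ε → ε ≠ ⊤ → cont Z hs (⋃ n, A n) ≤ M + 8 ^ s * (ε + ε) by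
    have hl : Tendsto (fun ε : ℝ≥0∞ => M + 8 ^ s * (ε + ε)) (𝓝[>] 0) (𝓝 (M + 8 ^ s * (0 + 0))) := by
      apply Tendsto.mono_left _ nhdsWithin_le_nhds
      refine tendsto_const_nhds.add (ENNReal.Tendsto.const_mul (tendsto_id.add tendsto_id) ?_)
      right
      exact ENNReal.rpow_ne_top_of_nonneg hs.le (by simp)
    simp only [add_zero, mul_zero] at hl
    refine ge_of_tendsto hl ?_
    have h1 : ∀ᶠ ε : ℝ≥0∞ in 𝓝[>] 0, ε < ⊤ :=
      nhdsWithin_le_nhds (eventually_lt_nhds (by simp))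
    filter_upwards [h1, self_mem_nhdsWithin] with ε hε1 hε2
    exact key ε hε2 hε1.ne
  intro ε hε hεt
  obtain ⟨I, hI⟩ : ∃ I : ℕ, ∑' i, d (i + I) ^ s ≤ ε := by
    have := ENNReal.tendsto_sum_nat_add (fun i => d i ^ s) (ne_top_of_le_ne_top hM hdsum)
    exact (this.eventually (eventually_le_nhds hε)).exists
  obtain ⟨δ, hδ, hδ2⟩ := ENNReal.exists_pos_sum_of_countable' hε.ne' ℕ
  choose r hr hrs using fun i => exists_radius hs (d i) (δ i) (hdtop i) (hδ i)
  have hr0 : ∀ i, 0 < r i := fun i => pos_of_gt (hr i)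
  have hrev : ∀ i, ∀ᶠ n in U, ediam (t n i) < r i := fun i =>
    (hd i).eventually (eventually_lt_nhds (hr i))
  let conv : ℕ → Prop := fun i => ∃ z, ∀ᶠ n in U, (t n i ∩ eball z (2 * r i)).Nonempty
  have hC : ∀ i, ∃ C : Set Z, ediam C ≤ 8 * r i ∧ (conv i → ∀ᶠ n in U, t n i ⊆ C) := by
    intro i
    by_cases hc : conv i
    · obtain ⟨z, hz⟩ := hc
      refine ⟨eball z (4 * r i), ?_, fun _ => ?_⟩
      · refine Metric.ediam_eball_le.trans (le_of_eq ?_)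
        rw [← mul_assoc]; norm_num
      · filter_upwards [hz, hrev i] with n hn1 hn2
        obtain ⟨a, ha1, ha2⟩ := hn1
        intro y hy
        rw [Metric.mem_eball] at ha2 ⊢
        calc edist y z ≤ edist y a + edist a z := edist_triangle _ _ _
          _ < r i + 2 * r i := ENNReal.add_lt_add
              ((Metric.edist_le_ediam_of_mem hy ha1).trans_lt hn2) ha2
          _ ≤ 4 * r i := by
              rw [show r i + 2 * r i = 3 * r i by ring]
              gcongr; norm_num
    · exact ⟨∅, by simp, fun hc' => absurd hc' hc⟩
  choose C hCd hCt using hC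
  have hesc : ∀ i, ¬ conv i → ∀ m, ediam (t m i) < r i → ∀ᶠ n in U, Disjoint (t m i) (t n i) := by
    intro i hi m hm
    rcases (t m i).eq_empty_or_nonempty with he | ⟨z, hz⟩
    · simp [he]
    have h1 : ¬ ∀ᶠ n in U, (t n i ∩ eball z (2 * r i)).Nonempty := fun h => hi ⟨z, h⟩
    rw [← Ultrafilter.eventually_not] at h1
    filter_upwards [h1] with n hn
    rw [Set.disjoint_left]
    intro y hy hy'
    refine hn ⟨y, hy', ?_⟩
    rw [Metric.mem_eball]
    refine ((Metric.edist_le_ediam_of_mem hy hz).trans_lt hm).trans_le ?_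
    exact le_mul_of_one_le_left' (by norm_num)
  -- the countable basis
  obtain ⟨V, hV⟩ : ∃ V : ℕ → Set Z, ∀ x, ∀ O ∈ 𝓝 x, ∃ b, x ∈ V b ∧ V b ⊆ O := by
    obtain ⟨Bs, hc, -, hb⟩ := TopologicalSpace.exists_countable_basis Z
    obtain ⟨V, hV⟩ := (hc.insert ∅).exists_eq_range (insert_nonempty _ _)
    refine ⟨V, fun x O hO => ?_⟩
    obtain ⟨v, hv, hxv, hvO⟩ := hb.mem_nhds_iff.1 hO
    obtain ⟨b, rfl⟩ : v ∈ range V := hV ▸ mem_insert_of_mem _ hv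
    exact ⟨b, hxv, hvO⟩
  let bad : ℕ → Prop := fun b => ∀ᶠ n in U, ∀ i < I, Disjoint (V b) (t n i)
  let E : ℕ → Set Z := fun i => {x | ∀ O ∈ 𝓝 x, ∀ᶠ n in U, (O ∩ t n i).Nonempty}
  have hE : ∀ i, ediam (E i) ≤ d i := fun i => ediam_limit U (fun n => t n i) (d i) (hd i)
  obtain ⟨f, hfP, hfR⟩ := exists_subseq U
    (fun j n => j ≤ n ∧ ∀ i ≤ j, (bad i → ∀ k < I, Disjoint (V i) (t n k)) ∧
      ediam (t n i) < r i ∧ (conv i → t n i ⊆ C i))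
    (fun j m n => ∀ i ≤ j, ¬ conv i → Disjoint (t m i) (t n i))
    (by
      intro j
      refine Eventually.and (hU (eventually_ge_atTop j)) ?_
      refine (Filter.eventually_all_finite (finite_Iic j)).2 fun i _ => ?_
      refine Eventually.and ?_ ((hrev i).and ?_)
      · by_cases hb : bad i
        · exact hb.mono fun n hn _ => hn
        · exact Eventually.of_forall fun n hb' => absurd hb' hb
      · by_cases hb : conv i
        · exact (hCt i hb).mono fun n hn _ => hn
        · exact Eventually.of_forall fun n hb' => absurd hb' hb)
    (by
      rintro j m ⟨-, hm⟩
      refine (Filter.eventually_all_finite (finite_Iic j)).2 fun i hi => ?_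
      by_cases hb : conv i
      · exact Eventually.of_forall fun n hb' => absurd hb hb'
      · exact (hesc i hb m (hm i hi).2.1).mono fun n hn _ => hn)
    (fun i j n hij hn => ⟨hij.trans hn.1, fun k hk => hn.2 k (hk.trans hij)⟩)
    (fun i j m n hij hn k hk => hn k (hk.trans hij))
  let CC : Set Z := ⋃ i, {x | I ≤ i ∧ conv i ∧ x ∈ C i}
  have hres : ∀ p b, bad b → cont Z hs ((A p ∩ V b) \ CC) = 0 := by
    intro p b hb
    refine le_antisymm ((cont_le_hausdorff hs _).trans (le_of_eq ?_)) (by simp)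
    refine h0 _ (fun x hx => hAX p hx.1.1) ?_
    refine residual hs (M + 3) (by simp [hM]) (fun l i => t (f l) i) _ ?_ ?_ ?_ ?_
    · refine ⟨p, fun l hl x hx => ht (f l) (hA (hl.trans (hfP l).1) hx.1.1)⟩
    · intro l
      refine (hsum (f l)).trans ?_
      gcongr
      refine le_trans (b := 1) ?_ (by norm_num)
      rw [ENNReal.inv_le_one]; exact_mod_cast Nat.le_add_left 1 _
    · intro l i
      exact hsort (f l) i
    · intro i
      by_cases hi : i < I
      · refine ⟨b, fun l hl l' _ _ x hx hxt _ => ?_⟩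
        exact Set.disjoint_left.1 (((hfP l).2 b hl).1 hb i hi) hx.1.2 hxt
      · by_cases hc : conv i
        · refine ⟨i, fun l hl l' _ _ x hx hxt _ => hx.2 ?_⟩
          exact mem_iUnion.2 ⟨i, not_lt.1 hi, hc, ((hfP l).2 i hl).2.2 hc hxt⟩
        · refine ⟨i, fun l hl l' hl' hne x hx hxt hxt' => ?_⟩
          rcases lt_or_gt_of_ne hne with hlt | hlt
          · exact Set.disjoint_left.1 (hfR l l' hlt i hl hc) hxt hxt'
          · exact Set.disjoint_left.1 (hfR l' l hlt i hl' hc) hxt' hxt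
  have hsub : (⋃ n, A n) ⊆ ((⋃ i ∈ Finset.range I, E i) ∪ ⋃ i, (if conv (i + I) then C (i + I) else ∅)) ∪
      ⋃ p, ⋃ b, ⋃ _ : bad b, ((A p ∩ V b) \ CC) := by
    intro x hx
    obtain ⟨p, hp⟩ := mem_iUnion.1 hx
    by_cases h1 : x ∈ CC
    · left; right
      obtain ⟨i, hi, hc, hxC⟩ := mem_iUnion.1 h1
      refine mem_iUnion.2 ⟨i - I, ?_⟩
      rw [Nat.sub_add_cancel hi, if_pos hc]
      exact hxC
    by_cases h2 : x ∈ ⋃ i ∈ Finset.range I, E i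
    · left; left; exact h2
    right
    have h3 : ∀ i < I, ∃ O ∈ 𝓝 x, ∀ᶠ n in U, ¬ (O ∩ t n i).Nonempty := by
      intro i hi
      by_contra hcon
      push Not at hcon
      apply h2
      refine mem_iUnion₂.2 ⟨i, Finset.mem_range.2 hi, fun O hO => ?_⟩
      exact hcon O hO
    choose! O hO hOt using h3
    obtain ⟨b, hxb, hb⟩ := hV x (⋂ i ∈ Finset.range I, O i)
      ((Filter.biInter_finset_mem _).2 fun i hi => hO i (Finset.mem_range.1 hi))
    have hbad : bad b := by
      refine (Filter.eventually_all_finite (finite_Iio I)).2 fun i hi => ?_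
      filter_upwards [hOt i hi] with n hn
      rw [Set.disjoint_left]
      intro y hy hyt
      exact hn ⟨y, mem_iInter₂.1 (hb hy) i (Finset.mem_range.2 hi), hyt⟩
    exact mem_iUnion.2 ⟨p, mem_iUnion.2 ⟨b, mem_iUnion.2 ⟨hbad, ⟨hp, hxb⟩, h1⟩⟩⟩
  have hz : cont Z hs (⋃ p, ⋃ b, ⋃ _ : bad b, ((A p ∩ V b) \ CC)) = 0 := by
    simp only [measure_iUnion_null_iff]
    exact hres
  calc cont Z hs (⋃ n, A n) ≤ _ := measure_mono hsub
    _ ≤ _ := measure_union_le _ _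
    _ = cont Z hs ((⋃ i ∈ Finset.range I, E i) ∪
          ⋃ i, (if conv (i + I) then C (i + I) else ∅)) := by rw [hz, add_zero]
    _ ≤ cont Z hs (⋃ i ∈ Finset.range I, E i) +
          cont Z hs (⋃ i, (if conv (i + I) then C (i + I) else ∅)) := measure_union_le _ _
    _ ≤ M + 8 ^ s * (ε + ε) := by
      gcongr
      · calc cont Z hs (⋃ i ∈ Finset.range I, E i) ≤ ∑ i ∈ Finset.range I, cont Z hs (E i) :=
              measure_biUnion_finset_le _ _
          _ ≤ ∑ i ∈ Finset.range I, d i ^ s := Finset.sum_le_sum fun i _ =>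
              (cont_le_ediam hs _).trans (ENNReal.rpow_le_rpow (hE i) hs.le)
          _ ≤ ∑' i, d i ^ s := ENNReal.sum_le_tsum _
          _ ≤ M := hdsum
      · calc _ ≤ ∑' i, cont Z hs (if conv (i + I) then C (i + I) else ∅) := measure_iUnion_le _
          _ ≤ ∑' i, 8 ^ s * (d (i + I) ^ s + δ (i + I)) := by
            refine ENNReal.tsum_le_tsum fun i => ?_
            rw [← hrs, ← ENNReal.mul_rpow_of_nonneg _ _ hs.le]
            split_ifs
            · exact (cont_le_ediam hs _).trans (ENNReal.rpow_le_rpow (hCd _) hs.le)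
            · simp
          _ = 8 ^ s * (∑' i, d (i + I) ^ s + ∑' i, δ (i + I)) := by
            rw [ENNReal.tsum_mul_left, ENNReal.tsum_add]
          _ ≤ _ := by
            gcongr
            exact (ENNReal.tsum_comp_le_tsum_of_injective (add_left_injective I) δ).trans hδ2.le

lemma exists_compact_of_finite {s : ℝ} (hs : 0 < s) (f : (ℕ → ℕ) → Z)
    (hf : Continuous f) (S : Set Z) (hS : S ⊆ range f) (h0 : 0 < μH[s] S) (h1 : μH[s] S < ⊤) :
    ∃ K ⊆ range f, IsCompact K ∧ 0 < cont Z hs K := by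
  let m : Measure Z := (μH[s]).restrict (toMeasurable μH[s] S)
  have hfin : IsFiniteMeasure m := by
    refine ⟨?_⟩
    simp only [m, Measure.restrict_apply_univ, measure_toMeasurable]
    exact h1
  have hm0 : 0 < m (range f) := by
    refine lt_of_lt_of_le h0 ?_
    refine le_trans ?_ (measure_mono hS)
    simp only [m]
    refine le_trans (le_of_eq ?_) (Measure.le_restrict_apply _ _)
    rw [inter_eq_left.2 (subset_toMeasurable _ _)]
  obtain ⟨c, hc0, hc⟩ := exists_between hm0
  obtain ⟨k, hk⟩ := capacity f (fun A => m A) c (by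
    intro A hA _ hlt
    rw [hA.measure_iUnion] at hlt
    exact lt_iSup_iff.1 hlt) hc
  refine ⟨f '' {x | ∀ i, x i ≤ k i}, image_subset_range _ _, (compact_box k).image hf, ?_⟩
  rw [pos_iff_ne_zero]
  intro hz
  have hz' := hausdorff_eq_zero hs hz
  have hmz : m (f '' {x | ∀ i, x i ≤ k i}) = 0 :=
    le_antisymm ((Measure.restrict_apply_le _ _).trans hz'.le) (by simp)
  obtain ⟨W, hKW, hW, hWc⟩ := Set.exists_isOpen_lt_of_lt (μ := m) _ c (by rw [hmz]; exact hc0)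
  obtain ⟨j, hj⟩ := box_open f hf k W hW hKW
  exact absurd ((hk j).trans_le (measure_mono hj)) (not_lt.2 hWc.le)

lemma exists_compact_of_infinite [SecondCountableTopology Z] {s : ℝ} (hs : 0 < s)
    (f : (ℕ → ℕ) → Z) (hf : Continuous f) (hpos : 0 < μH[s] (range f))
    (h0 : ∀ S ⊆ range f, μH[s] S < ⊤ → μH[s] S = 0) :
    ∃ K ⊆ range f, IsCompact K ∧ 0 < cont Z hs K := by
  have hc0 : 0 < cont Z hs (range f) := by
    rw [pos_iff_ne_zero]
    intro hz
    exact hpos.ne' (hausdorff_eq_zero hs hz)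
  obtain ⟨c, hc0, hc⟩ := exists_between hc0
  obtain ⟨k, hk⟩ := capacity f (fun A => cont Z hs A) c (by
    intro A hA hAX hlt
    by_contra hcon
    push Not at hcon
    exact absurd hlt (not_lt.2
      (increasing hs (range f) h0 A hA hAX c hc.ne_top hcon))) hc
  refine ⟨f '' {x | ∀ i, x i ≤ k i}, image_subset_range _ _, (compact_box k).image hf, ?_⟩
  by_contra hz
  obtain ⟨W, hW, hKW, hWc⟩ := cont_open hs (lt_of_le_of_lt (not_lt.1 hz) hc0)
  obtain ⟨j, hj⟩ := box_open f hf k W hW hKW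
  exact absurd ((hk j).trans_le (measure_mono hj)) (not_lt.2 hWc.le)

lemma exists_compact [SecondCountableTopology Z] {s : ℝ} (hs : 0 < s) (X : Set Z)
    (hX : AnalyticSet X) (hpos : 0 < μH[s] X) :
    ∃ K ⊆ X, IsCompact K ∧ 0 < cont Z hs K := by
  rw [AnalyticSet] at hX
  rcases hX with rfl | ⟨f, hf, rfl⟩
  · simp at hpos
  by_cases h : ∃ S ⊆ range f, 0 < μH[s] S ∧ μH[s] S < ⊤
  · obtain ⟨S, hS, h1, h2⟩ := h
    exact exists_compact_of_finite hs f hf S hS h1 h2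
  · push Not at h
    refine exists_compact_of_infinite hs f hf hpos fun S hS hlt => ?_
    by_contra hne
    exact absurd hlt (not_lt.2 (h S hS (pos_iff_ne_zero.2 hne)))

section Compact

variable {Y : Type*} [MetricSpace Y] [CompactSpace Y] [MeasurableSpace Y] [BorelSpace Y]

/-- total cost of a weighted family of sets -/
noncomputable def cost (Y : Type*) [MetricSpace Y] (s : ℝ) : (Set Y →₀ ℝ≥0) →ₗ[ℝ≥0] ℝ≥0 :=
  Finsupp.linearCombination ℝ≥0 (fun B => (ediam B ^ s).toNNReal)

open Classical in
/-- value at a point of the weighted sum of indicator functions -/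
noncomputable def val {Y : Type*} (y : Y) : (Set Y →₀ ℝ≥0) →ₗ[ℝ≥0] ℝ≥0 :=
  Finsupp.linearCombination ℝ≥0 (fun B => if y ∈ B then 1 else 0)

lemma ediam_ne_top (B : Set Y) : ediam B ≠ ⊤ :=
  (Metric.isBounded_of_compactSpace (s := B)).ediam_ne_top

lemma weighted {s : ℝ} (hs : 0 < s) (w : Set Y →₀ ℝ≥0) (hw : ∀ y, 1 ≤ val y w) :
    cont Y hs univ / 5 ^ s ≤ cost Y s w := by
  classical
  have hcost : ∀ B : Set Y, ((ediam B ^ s).toNNReal : ℝ≥0∞) = ediam B ^ s := fun B =>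
    ENNReal.coe_toNNReal (ENNReal.rpow_ne_top_of_nonneg hs.le (ediam_ne_top B))
  let S : ℝ≥0∞ := ∑ B ∈ w.support, ediam B ^ s
  have hS : S ≠ ⊤ := ENNReal.sum_ne_top.2 fun B _ =>
    ENNReal.rpow_ne_top_of_nonneg hs.le (ediam_ne_top B)
  have main : ∀ N : ℕ, N * (cont Y hs univ / 5 ^ s) ≤ N * (cost Y s w : ℝ≥0∞) + S := by
    intro N
    let n : Set Y → ℕ := fun B => ⌈N * w B⌉₊
    let ι := Σ B : w.support, Fin (n B)
    have hm := multiplicity (ι := ι) (fun a => a.1.1) (ediam (univ : Set Y)) (ediam_ne_top _)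
      (fun a => Metric.ediam_mono (subset_univ _)) univ (fun a => ediam (a.1.1) ^ s)
      (cont Y hs univ / 5 ^ s) (by
        intro u hu
        apply ENNReal.div_le_of_le_mul'
        calc cont Y hs univ ≤ ∑' a : u, ediam (enl a.1.1.1) ^ s := by
              apply cont_le_tsum hs
              intro x hx
              obtain ⟨a, ha, hxa⟩ := mem_iUnion₂.1 (hu hx)
              exact mem_iUnion.2 ⟨⟨a, ha⟩, hxa⟩
          _ ≤ ∑' a : u, 5 ^ s * ediam (a.1.1.1) ^ s :=
              ENNReal.tsum_le_tsum fun a => ediam_enl_rpow hs _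
          _ = _ := ENNReal.tsum_mul_left) N univ (by
        intro x _
        have h1 : (N : ℝ≥0) ≤ ∑ B ∈ w.support, (n B : ℝ≥0) * (if x ∈ B then 1 else 0) := by
          calc (N : ℝ≥0) = N * 1 := (mul_one _).symm
            _ ≤ N * val x w := by gcongr; exact hw x
            _ = ∑ B ∈ w.support, (N * w B) * (if x ∈ B then 1 else 0) := by
              simp only [val, Finsupp.linearCombination_apply, Finsupp.sum, smul_eq_mul,
                Finset.mul_sum, mul_assoc]
            _ ≤ _ := by
              gcongr with B hB
              exact Nat.le_ceil _
        have h2 : N ≤ ∑ B ∈ w.support, n B * (if x ∈ B then 1 else 0) := by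
          exact_mod_cast h1
        have h3 : (Finset.univ.filter (fun a : ι => x ∈ a.1.1)).card =
            ∑ B ∈ w.support, n B * (if x ∈ B then 1 else 0) := by
          rw [Finset.card_filter, Fintype.sum_sigma, ← Finset.sum_coe_sort w.support]
          refine Finset.sum_congr rfl fun B _ => ?_
          split_ifs <;> simp [*]
        rw [← h3] at h2
        calc (N : ℕ∞) ≤ ((Finset.univ.filter (fun a : ι => x ∈ a.1.1)).card : ℕ∞) := by
              exact_mod_cast h2
          _ = ((Finset.univ.filter (fun a : ι => x ∈ a.1.1) : Finset ι) : Set ι).encard :=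
              (Set.encard_coe_eq_coe_finsetCard _).symm
          _ ≤ _ := by
              apply Set.encard_le_encard
              intro a ha
              simpa using ha)
    refine hm.trans ?_
    rw [tsum_univ (fun a : ι => ediam (a.1.1) ^ s), tsum_fintype, Fintype.sum_sigma]
    calc ∑ B : w.support, ∑ _ : Fin (n B), ediam (B : Set Y) ^ s
        = ∑ B ∈ w.support, (n B : ℝ≥0∞) * ediam B ^ s := by
          rw [← Finset.sum_coe_sort w.support]
          refine Finset.sum_congr rfl fun B _ => ?_
          simp
      _ ≤ ∑ B ∈ w.support, ((N : ℝ≥0∞) * (w B * ediam B ^ s) + ediam B ^ s) := by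
          refine Finset.sum_le_sum fun B _ => ?_
          have h1 : (n B : ℝ≥0) ≤ N * w B + 1 := (Nat.ceil_lt_add_one (by simp)).le
          have h2 : (n B : ℝ≥0∞) ≤ N * w B + 1 := by exact_mod_cast h1
          calc (n B : ℝ≥0∞) * ediam B ^ s ≤ (N * w B + 1) * ediam B ^ s := by gcongr
            _ = _ := by ring
      _ = _ := by
          rw [Finset.sum_add_distrib, ← Finset.mul_sum]
          congr 2
          simp only [cost, Finsupp.linearCombination_apply, Finsupp.sum, smul_eq_mul]
          push_cast
          refine Finset.sum_congr rfl fun B _ => ?_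
          rw [hcost]
  have hl : Tendsto (fun N : ℕ => (cost Y s w : ℝ≥0∞) + S / N) atTop
      (𝓝 ((cost Y s w : ℝ≥0∞) + 0)) := by
    refine tendsto_const_nhds.add ?_
    have := (ENNReal.Tendsto.const_div (a := S) ENNReal.tendsto_nat_nhds_top (Or.inr hS))
    simpa using this
  rw [add_zero] at hl
  refine ge_of_tendsto hl ?_
  filter_upwards [eventually_gt_atTop 0] with N hN
  have hN0 : (N : ℝ≥0∞) ≠ 0 := by exact_mod_cast hN.ne'
  rw [← ENNReal.mul_le_mul_iff_right hN0 (by simp), mul_add,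
    ENNReal.mul_div_cancel hN0 (by simp)]
  exact main N

/-- the set of costs of weighted families dominating `f` -/
def costs (s : ℝ) (f : C(Y, ℝ)) : Set ℝ :=
  {r | ∃ w : Set Y →₀ ℝ≥0, (∀ y, f y ≤ val y w) ∧ r = cost Y s w}

/-- the sublinear functional -/
noncomputable def pp (s : ℝ) (f : C(Y, ℝ)) : ℝ := sInf (costs s f)

lemma val_single (y : Y) (B : Set Y) (c : ℝ≥0) (hy : y ∈ B) : val y (Finsupp.single B c) = c := by
  simp [val, hy]

lemma costs_bdd (s : ℝ) (f : C(Y, ℝ)) : BddBelow (costs s f) :=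
  ⟨0, by rintro r ⟨w, -, rfl⟩; exact NNReal.coe_nonneg _⟩

lemma costs_nonempty (s : ℝ) (f : C(Y, ℝ)) : (costs s f).Nonempty := by
  refine ⟨_, Finsupp.single univ ‖f‖₊, fun y => ?_, rfl⟩
  rw [val_single _ _ _ (mem_univ y)]
  exact (le_abs_self _).trans (f.norm_coe_le_norm y)

lemma pp_le (s : ℝ) (f : C(Y, ℝ)) (w : Set Y →₀ ℝ≥0) (h : ∀ y, f y ≤ val y w) :
    pp s f ≤ cost Y s w := csInf_le (costs_bdd s f) ⟨w, h, rfl⟩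

lemma le_pp (s : ℝ) (f : C(Y, ℝ)) (a : ℝ)
    (h : ∀ w : Set Y →₀ ℝ≥0, (∀ y, f y ≤ val y w) → a ≤ cost Y s w) : a ≤ pp s f :=
  le_csInf (costs_nonempty s f) (by rintro r ⟨w, hw, rfl⟩; exact h w hw)

lemma pp_nonneg (s : ℝ) (f : C(Y, ℝ)) : 0 ≤ pp s f :=
  le_pp s f 0 fun _ _ => NNReal.coe_nonneg _

lemma pp_add (s : ℝ) (f g : C(Y, ℝ)) : pp s (f + g) ≤ pp s f + pp s g := by
  rw [← sub_le_iff_le_add]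
  refine le_pp s f _ fun w hw => ?_
  rw [sub_le_iff_le_add, ← sub_le_iff_le_add']
  refine le_pp s g _ fun v hv => ?_
  rw [sub_le_iff_le_add']
  have := pp_le s (f + g) (w + v) (fun y => by
    rw [map_add]; push_cast; exact add_le_add (hw y) (hv y))
  rw [map_add] at this
  exact_mod_cast this

lemma pp_smul_le (s : ℝ) (c : ℝ) (hc : 0 < c) (f : C(Y, ℝ)) : pp s (c • f) ≤ c * pp s f := by
  rw [← div_le_iff₀' hc]
  refine le_pp s f _ fun w hw => ?_
  rw [div_le_iff₀' hc]
  have := pp_le s (c • f) ((NNReal.mk c hc.le) • w) (fun y => by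
    rw [map_smul]
    exact mul_le_mul_of_nonneg_left (hw y) hc.le)
  rw [map_smul] at this
  exact this

lemma pp_smul (s : ℝ) (c : ℝ) (hc : 0 < c) (f : C(Y, ℝ)) : pp s (c • f) = c * pp s f := by
  refine le_antisymm (pp_smul_le s c hc f) ?_
  have := pp_smul_le s c⁻¹ (inv_pos.2 hc) (c • f)
  rw [smul_smul, inv_mul_cancel₀ hc.ne', one_smul] at this
  rwa [inv_mul_eq_div, le_div_iff₀' hc] at this

lemma exists_functional {s : ℝ} (hs : 0 < s) (h : 0 < cont Y hs univ) :
    ∃ L : C(Y, ℝ) →ₗ[ℝ] ℝ, 0 < L 1 ∧ ∀ f, L f ≤ pp s f := by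
  have hne : (1 : C(Y, ℝ)) ≠ 0 := by
    intro h1
    have : (univ : Set Y) = ∅ := by
      apply eq_empty_of_forall_notMem
      intro y _
      have := congrArg (fun f : C(Y, ℝ) => f y) h1
      simp at this
    rw [this] at h
    simp at h
  have hp1 : 0 < pp s (1 : C(Y, ℝ)) := by
    have hc : 0 < cont Y hs univ / 5 ^ s :=
      ENNReal.div_pos h.ne' (ENNReal.rpow_ne_top_of_nonneg hs.le (by simp))
    have h0 : ∀ w : Set Y →₀ ℝ≥0, (∀ y, (1 : C(Y, ℝ)) y ≤ val y w) →
        cont Y hs univ / 5 ^ s ≤ cost Y s w := fun w hw =>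
      weighted hs w (fun y => by exact_mod_cast hw y)
    obtain ⟨_, w, hw, -⟩ := costs_nonempty s (1 : C(Y, ℝ))
    have hct : cont Y hs univ / 5 ^ s ≠ ⊤ := ne_top_of_le_ne_top (by simp) (h0 w hw)
    refine lt_of_lt_of_le (ENNReal.toReal_pos hc.ne' hct) (le_pp s _ _ fun w hw => ?_)
    exact ENNReal.toReal_le_of_le_ofReal (by simp) (by simpa using h0 w hw)
  obtain ⟨L, hL1, hL2⟩ := exists_extension_of_le_sublinear
    (LinearPMap.mkSpanSingleton (1 : C(Y, ℝ)) (pp s (1 : C(Y, ℝ))) hne) (pp s)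
    (fun c hc f => pp_smul s c hc f) (pp_add s) (by
      rintro ⟨x, hx⟩
      obtain ⟨c, rfl⟩ := Submodule.mem_span_singleton.1 hx
      rw [LinearPMap.mkSpanSingleton'_apply]
      simp only [RingHom.id_apply, smul_eq_mul]
      rcases lt_or_ge 0 c with hc | hc
      · exact (pp_smul s c hc _).ge
      · exact (mul_nonpos_of_nonpos_of_nonneg hc hp1.le).trans (pp_nonneg s _))
  refine ⟨L, ?_, hL2⟩
  have := hL1 ⟨1, Submodule.mem_span_singleton_self _⟩
  rw [LinearPMap.mkSpanSingleton_apply] at this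
  rw [this]
  exact hp1

lemma compact_frostman {s : ℝ} (hs : 0 < s) (h : 0 < cont Y hs univ) :
    ∃ ν : Measure Y, 0 < ν univ ∧ ν univ < ⊤ ∧ ∀ x, ∀ r : ℝ, 0 < r →
      ν (ball x r) ≤ ENNReal.ofReal (4 ^ s * r ^ s) := by
  obtain ⟨L, hL1, hL⟩ := exists_functional hs h
  have hLpos : ∀ f : C(Y, ℝ), (∀ y, 0 ≤ f y) → 0 ≤ L f := by
    intro f hf
    have h1 := (hL (-f)).trans (pp_le s (-f) 0 (fun y => by simpa using hf y))
    simpa using h1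
  let Λ0 : CompactlySupportedContinuousMap Y ℝ →ₗ[ℝ] ℝ :=
    { toFun := fun g => L g.toContinuousMap
      map_add' := fun a b => L.map_add a.toContinuousMap b.toContinuousMap
      map_smul' := fun c a => L.map_smul c a.toContinuousMap }
  let Λ : CompactlySupportedContinuousMap Y ℝ →ₚ[ℝ] ℝ :=
    PositiveLinearMap.mk₀ Λ0 (fun g hg => hLpos g.toContinuousMap (fun y => hg y))
  have hΛ : ∀ f : C(Y, ℝ), Λ (CompactlySupportedContinuousMap.continuousMapEquiv f) = L f :=
    fun f => rfl
  let ν := RealRMK.rieszMeasure Λ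
  have htop : ν univ < ⊤ := by
    refine (RealRMK.rieszMeasure_le_of_eq_one Λ
      (f := CompactlySupportedContinuousMap.continuousMapEquiv (1 : C(Y, ℝ)))
      (fun x => ?_) isCompact_univ (fun x _ => ?_)).trans_lt ENNReal.ofReal_lt_top
    · exact zero_le_one
    · rfl
  refine ⟨ν, ?_, htop, ?_⟩
  · refine lt_of_lt_of_le (ENNReal.ofReal_pos.2 hL1) ?_
    rw [← hΛ]
    refine RealRMK.le_rieszMeasure_tsupport_subset Λ (fun x => ?_) (subset_univ _)
    exact ⟨zero_le_one, le_rfl⟩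
  · intro x r hr
    let f : C(Y, ℝ) := ⟨fun y => max 0 (min 1 (2 - dist y x / r)), by fun_prop⟩
    refine (measure_mono ball_subset_closedBall).trans ?_
    refine (RealRMK.rieszMeasure_le_of_eq_one Λ
      (f := CompactlySupportedContinuousMap.continuousMapEquiv f)
      (fun y => ?_) isClosed_closedBall.isCompact (fun y hy => ?_)).trans ?_
    · exact le_max_left _ _
    · change max 0 (min 1 (2 - dist y x / r)) = 1
      have : dist y x / r ≤ 1 := by rw [div_le_one hr]; exact hy
      rw [min_eq_left (by linarith)]
      simp
    · apply ENNReal.ofReal_le_ofReal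
      rw [hΛ]
      refine (hL f).trans ((pp_le s f (Finsupp.single (ball x (2 * r)) 1) (fun y => ?_)).trans ?_)
      · by_cases hy : y ∈ ball x (2 * r)
        · rw [val_single _ _ _ hy]
          change max 0 (min 1 (2 - dist y x / r)) ≤ 1
          simp
        · have : 2 ≤ dist y x / r := by
            rw [le_div_iff₀ hr]
            simpa using hy
          change max 0 (min 1 (2 - dist y x / r)) ≤ _
          rw [max_eq_left]
          · exact NNReal.coe_nonneg _
          · exact (min_le_right _ _).trans (by linarith)
      · have h1 : ediam (ball x (2 * r)) ≤ ENNReal.ofReal (4 * r) := by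
          rw [← Metric.eball_ofReal]
          refine Metric.ediam_eball_le.trans (le_of_eq ?_)
          rw [show (4 * r) = 2 * (2 * r) by ring, ENNReal.ofReal_mul (p := 2) (by norm_num)]
          simp
        have h2 : ediam (ball x (2 * r)) ^ s ≤ ENNReal.ofReal (4 ^ s * r ^ s) := by
          refine (ENNReal.rpow_le_rpow h1 hs.le).trans (le_of_eq ?_)
          rw [ENNReal.ofReal_rpow_of_pos (by positivity), Real.mul_rpow (by norm_num) hr.le]
        have h3 : ((cost Y s (Finsupp.single (ball x (2 * r)) 1) : ℝ≥0) : ℝ) =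
            (ediam (ball x (2 * r)) ^ s).toReal := by
          simp [cost, ENNReal.toReal]
        rw [h3]
        exact ENNReal.toReal_le_of_le_ofReal (by positivity) h2

end Compact

lemma cont_subtype {s : ℝ} (hs : 0 < s) (K : Set Z) :
    cont Z hs K ≤ cont K hs univ := by
  refine le_of_forall_gt fun c hc => ?_
  obtain ⟨t, ht, hlt⟩ := exists_cover hs hc
  refine lt_of_le_of_lt (cont_le_tsum hs (fun i => Subtype.val '' t i) ?_) (lt_of_eq_of_lt ?_ hlt)
  · intro x hx
    obtain ⟨i, hi⟩ := mem_iUnion.1 (ht (mem_univ (⟨x, hx⟩ : K)))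
    exact mem_iUnion.2 ⟨i, ⟨x, hx⟩, hi, rfl⟩
  · refine tsum_congr fun i => ?_
    rw [(isometry_subtype_coe).ediam_image]

end Frost

theorem frostman_of_hausdorffMeasure_pos {Z : Type*}
    [MetricSpace Z] [CompleteSpace Z] [TopologicalSpace.SeparableSpace Z]
    [MeasurableSpace Z] [BorelSpace Z]
    (X : Set Z) (hX : MeasureTheory.AnalyticSet X) (s : ℝ) (hs : 0 < s)
    (hH : 0 < μH[s] X) :
    ∃ μ : Measure Z, μ Xᶜ = 0 ∧ 0 < μ X ∧ μ X < ⊤ ∧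
      ∃ c : ℝ, 0 < c ∧ ∀ x ∈ X, ∀ r : ℝ, 0 < r → μ (ball x r) ≤ ENNReal.ofReal (c * r ^ s) := by
  have : SecondCountableTopology Z := UniformSpace.secondCountable_of_separable Z
  obtain ⟨K, hKX, hK, hpos⟩ := Frost.exists_compact hs X hX hH
  have : CompactSpace K := isCompact_iff_compactSpace.1 hK
  obtain ⟨ν, hν0, hνt, hν⟩ := Frost.compact_frostman (Y := K) hs
    (hpos.trans_le (Frost.cont_subtype hs K))
  have hemb : MeasurableEmbedding (Subtype.val : K → Z) :=
    MeasurableEmbedding.subtype_coe hK.isClosed.measurableSet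
  have hap : ∀ S : Set Z, ν.map Subtype.val S = ν (Subtype.val ⁻¹' S) := fun S => hemb.map_apply ν S
  have hXu : (Subtype.val ⁻¹' X : Set K) = univ := by
    ext y; simp [hKX y.2]
  refine ⟨ν.map Subtype.val, ?_, ?_, ?_, 4 ^ s * 2 ^ s, by positivity, ?_⟩
  · rw [hap, preimage_compl, hXu]; simp
  · rw [hap, hXu]; exact hν0
  · rw [hap, hXu]; exact hνt
  · intro x _ r hr
    rw [hap]
    rcases (Subtype.val ⁻¹' ball x r : Set K).eq_empty_or_nonempty with he | ⟨y, hy⟩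
    · rw [he]; simp
    · have hsub : (Subtype.val ⁻¹' ball x r : Set K) ⊆ ball y (2 * r) := by
        intro z hz
        have h1 : dist (z : Z) x < r := hz
        have h2 : dist (y : Z) x < r := hy
        rw [mem_ball, Subtype.dist_eq]
        linarith [dist_triangle_right (z : Z) y x]
      refine (measure_mono hsub).trans ((hν y (2 * r) (by positivity)).trans (le_of_eq ?_))
      rw [Real.mul_rpow (by norm_num) hr.le, mul_assoc]
end

section
/- Let X be an analytic subset of a complete separable metric space. Then the Hausdorff dimension of X equals sup{s > 0 : there exists a Borel measure μ on X with 0 < μ(X) < ∞ and I_s(μ) < ∞} (with the convention that the supremum of the empty set is 0). -/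
open scoped ENNReal NNReal
open MeasureTheory Metric Set

/-- The `s`-energy of a measure. -/
noncomputable def energy {X : Type*} [PseudoMetricSpace X] [MeasurableSpace X] (s : ℝ)
    (μ : Measure X) : ℝ≥0∞ :=
  ∫⁻ x₁, ∫⁻ x₂, edist x₁ x₂ ^ (-s) ∂μ ∂μ

namespace EnergyDim

open Filter Topology

/-- dyadic scales -/
noncomputable def rr (k : ℕ) : ℝ≥0∞ := 2⁻¹ ^ k

lemma rr_ne_zero (k : ℕ) : rr k ≠ 0 := by simp [rr]

lemma rr_ne_top (k : ℕ) : rr k ≠ ⊤ := by simp [rr]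

lemma rr_le_one (k : ℕ) : rr k ≤ 1 := pow_le_one₀ (by simp) (by simp)

lemma rr_zero : rr 0 = 1 := by simp [rr]

lemma rr_succ (k : ℕ) : 2 * rr (k + 1) = rr k := by
  rw [rr, rr, pow_succ, mul_comm (_ ^ k), ← mul_assoc, ENNReal.mul_inv_cancel (by simp) (by simp),
    one_mul]

lemma rr_anti : Antitone rr := fun _ _ h => pow_le_pow_of_le_one (by simp) (by simp) h

lemma rr_rpow_ne_zero (k : ℕ) (s : ℝ) : rr k ^ s ≠ 0 := by
  simp [ENNReal.rpow_eq_zero_iff, rr_ne_zero, rr_ne_top]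

lemma rr_rpow_ne_top (k : ℕ) (s : ℝ) : rr k ^ s ≠ ⊤ := by
  simp [ENNReal.rpow_eq_top_iff, rr_ne_zero, rr_ne_top]

lemma rr_rpow_eq (k : ℕ) (s : ℝ) : rr k ^ s = ((2⁻¹ : ℝ≥0∞) ^ s) ^ k := by
  rw [rr, ← ENNReal.rpow_natCast, ← ENNReal.rpow_mul, mul_comm, ENNReal.rpow_mul,
    ENNReal.rpow_natCast]

lemma half_rpow_lt_one {s : ℝ} (hs : 0 < s) : (2⁻¹ : ℝ≥0∞) ^ s < 1 :=
  ENNReal.rpow_lt_one (by simp) hs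

lemma rr_rpow_tendsto {s : ℝ} (hs : 0 < s) : Tendsto (fun k => rr k ^ s) atTop (𝓝 0) := by
  simp_rw [rr_rpow_eq]
  exact ENNReal.tendsto_pow_atTop_nhds_zero_of_lt_one (half_rpow_lt_one hs)

lemma tsum_rr_rpow {s : ℝ} (hs : 0 < s) : ∑' k, rr k ^ s ≠ ⊤ := by
  simp_rw [rr_rpow_eq]
  rw [ENNReal.tsum_geometric]
  exact ENNReal.inv_ne_top.2 (tsub_pos_of_lt (half_rpow_lt_one hs)).ne'

lemma rr_rpow_anti_exp (k : ℕ) {s t : ℝ} (h : s ≤ t) : rr k ^ t ≤ rr k ^ s :=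
  ENNReal.rpow_le_rpow_of_exponent_ge (rr_le_one k) h

variable {Z : Type*} [MetricSpace Z]

/-- dyadic Hausdorff content -/
noncomputable def Hc (s : ℝ) : OuterMeasure Z :=
  OuterMeasure.boundedBy (fun A => ⨅ (k : ℕ) (_ : ediam A ≤ rr k), rr k ^ s)

lemma Hc_le {s : ℝ} {A : Set Z} {k : ℕ} (h : ediam A ≤ rr k) : Hc s A ≤ rr k ^ s :=
  (OuterMeasure.boundedBy_le _).trans (iInf₂_le k h)

lemma Hc_anti {s t : ℝ} (h : s ≤ t) (A : Set Z) : Hc t A ≤ Hc s A := by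
  have : (Hc t : OuterMeasure Z) ≤ Hc s := by
    unfold Hc
    rw [OuterMeasure.le_boundedBy]
    intro B
    refine le_iInf₂ fun k hk => (Hc_le hk).trans (rr_rpow_anti_exp k h)
  exact this A

/-- unsorted covers -/
lemma exists_cover {s : ℝ} (hs : 0 < s) {A : Set Z} {c : ℝ≥0∞} (h : Hc s A < c) :
    ∃ (F : ℕ → Set Z) (κ : ℕ → ℕ), A ⊆ ⋃ i, F i ∧ (∀ i, ediam (F i) ≤ rr (κ i)) ∧
      ∑' i, rr (κ i) ^ s < c := by
  rw [Hc, OuterMeasure.boundedBy_apply, iInf_lt_iff] at h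
  obtain ⟨F, h⟩ := h
  rw [iInf_lt_iff] at h
  obtain ⟨hF, h⟩ := h
  obtain ⟨ε, hε, hlt⟩ := ENNReal.exists_pos_sum_of_countable' (ε := c - ∑' n, ⨆ (_ : (F n).Nonempty), ⨅ (k : ℕ) (_ : ediam (F n) ≤ rr k), rr k ^ s)
    (tsub_pos_of_lt h).ne' ℕ
  have key : ∀ n, ∃ k, ediam (F n) ≤ rr k ∧
      rr k ^ s ≤ (⨆ (_ : (F n).Nonempty), ⨅ (k : ℕ) (_ : ediam (F n) ≤ rr k), rr k ^ s) + ε n := by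
    intro n
    rcases (F n).eq_empty_or_nonempty with h0 | h0
    · obtain ⟨k, hk⟩ := ((rr_rpow_tendsto hs).eventually (gt_mem_nhds (hε n))).exists
      exact ⟨k, by simp [h0], hk.le.trans (by simp)⟩
    · simp only [h0, iSup_pos]
      have hfin : (⨆ (_ : (F n).Nonempty), ⨅ (k : ℕ) (_ : ediam (F n) ≤ rr k), rr k ^ s) ≠ ⊤ :=
        ne_top_of_le_ne_top (h.ne_top) (ENNReal.le_tsum n)
      simp only [h0, iSup_pos] at hfin
      have := ENNReal.lt_add_right hfin (hε n).ne'
      rw [iInf_lt_iff] at this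
      obtain ⟨k, hk⟩ := this
      rw [iInf_lt_iff] at hk
      obtain ⟨hk, hk'⟩ := hk
      exact ⟨k, hk, hk'.le⟩
  choose κ hκ hκ' using key
  refine ⟨F, κ, hF, hκ, ?_⟩
  calc ∑' i, rr (κ i) ^ s ≤ ∑' n, ((⨆ (_ : (F n).Nonempty), ⨅ (k : ℕ) (_ : ediam (F n) ≤ rr k), rr k ^ s) + ε n) :=
        ENNReal.tsum_le_tsum hκ'
    _ = _ := ENNReal.tsum_add
    _ < _ := by
      rw [add_comm]; exact lt_tsub_iff_right.1 hlt

lemma single_scale {ι : Type*} (s : ℝ) (k : ℕ) (F : ι → Set Z) (c : ι → ℝ≥0∞) (D : Set Z)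
    (v : ℝ≥0∞) (hv : v ≠ 0) (hv' : v ≠ ⊤) (hF : ∀ i, c i ≠ 0 → ediam (F i) ≤ rr (k + 1))
    (hD : ∀ x ∈ D, v ≤ ∑' i, (F i).indicator (fun _ => c i) x) :
    Hc s D ≤ (∑' i, c i) / v * rr k ^ s := by
  by_cases htop : ∑' i, c i = ⊤
  · rw [htop, ENNReal.top_div_of_ne_top hv', ENNReal.top_mul (rr_rpow_ne_zero _ _)]
    exact le_top
  obtain ⟨S, hS⟩ : ∃ S, Maximal (fun N ↦ N ⊆ D ∧ IsSeparated (rr (k + 1)) N) S := by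
    apply zorn_subset
    intro C hC hchain
    refine ⟨⋃₀ C, ⟨sUnion_subset fun t ht => (hC ht).1, ?_⟩, fun t ht => subset_sUnion_of_mem ht⟩
    exact (pairwise_sUnion hchain.directedOn).2 fun t ht => (hC ht).2
  have hsum : ∑' _ : S, v ≤ ∑' i, c i := by
    calc ∑' _ : S, v ≤ ∑' x : S, ∑' i, (F i).indicator (fun _ => c i) (x : Z) :=
          ENNReal.tsum_le_tsum fun x => hD x (hS.prop.1 x.2)
      _ = ∑' i, ∑' x : S, (F i).indicator (fun _ => c i) (x : Z) := ENNReal.tsum_comm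
      _ ≤ ∑' i, c i := by
          refine ENNReal.tsum_le_tsum fun i => ?_
          by_cases hc : c i = 0
          · simp [hc]
          by_cases hex : ∃ x : S, (x : Z) ∈ F i
          · obtain ⟨x, hx⟩ := hex
            rw [tsum_eq_single x]
            · exact indicator_le_self' (by simp) _
            · intro y hy
              apply indicator_of_notMem
              intro hyF
              have h1 := hS.prop.2 x.2 y.2 (fun h => hy (Subtype.ext h.symm))
              exact absurd (edist_le_of_ediam_le hx hyF (hF i hc)) (not_le.2 h1)
          · push Not at hex
            simp [hex]
  have hSfin : S.Finite := by
    by_contra hinf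
    have : Infinite S := Set.infinite_coe_iff.2 hinf
    rw [ENNReal.tsum_const_eq_top_of_ne_zero hv] at hsum
    exact htop (top_le_iff.1 hsum)
  have hcov : D ⊆ ⋃ x ∈ S, {y | edist x y ≤ rr (k + 1)} := by
    intro y hy
    by_contra hcon
    simp only [mem_iUnion, mem_ofPred_eq, not_exists, not_le] at hcon
    have hins : IsSeparated (rr (k + 1)) (insert y S) := by
      rw [isSeparated_insert]
      exact ⟨hS.prop.2, fun x hx _ => by rw [edist_comm]; exact hcon x hx⟩
    have := hS.le_of_ge ⟨insert_subset hy hS.prop.1, hins⟩ (subset_insert _ _) (mem_insert _ _)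
    have := hcon y this
    simp at this
  calc Hc s D ≤ Hc s (⋃ x ∈ S, {y | edist x y ≤ rr (k + 1)}) := measure_mono hcov
    _ ≤ ∑' x : S, Hc s {y | edist (x : Z) y ≤ rr (k + 1)} := measure_biUnion_le _ hSfin.countable _
    _ ≤ ∑' x : S, rr k ^ s := by
        refine ENNReal.tsum_le_tsum fun x => Hc_le (ediam_le fun a ha b hb => ?_)
        calc edist a b ≤ edist a x + edist (x : Z) b := edist_triangle _ _ _
          _ ≤ rr (k + 1) + rr (k + 1) := add_le_add (by rw [edist_comm]; exact ha) hb
          _ = rr k := by rw [← two_mul, rr_succ]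
    _ ≤ (∑' i, c i) / v * rr k ^ s := by
        rw [ENNReal.tsum_set_const] at hsum ⊢
        gcongr
        rwa [ENNReal.le_div_iff_mul_le (Or.inl hv) (Or.inl hv')]

lemma weighted_le (s δ : ℝ) (hδ : 0 < δ) : ∃ C : ℝ≥0∞, C ≠ ⊤ ∧
    ∀ {ι : Type*} (κ : ι → ℕ) (F : ι → Set Z) (c : ι → ℝ≥0∞) (D : Set Z),
      (∀ i, 1 ≤ κ i) → (∀ i, ediam (F i) ≤ rr (κ i)) →
      (∀ x ∈ D, 1 ≤ ∑' i, (F i).indicator (fun _ => c i) x) →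
      Hc s D ≤ C * ∑' i, c i * rr (κ i) ^ (s - δ) := by
  obtain ⟨θ, hθ0, hθ⟩ : ∃ θ : ℝ≥0∞, θ ≠ 0 ∧ θ * ∑' k, rr k ^ δ < 1 := by
    have hT := tsum_rr_rpow hδ
    refine ⟨(∑' k, rr k ^ δ + 1)⁻¹, ENNReal.inv_ne_zero.2 (ENNReal.add_ne_top.2 ⟨hT, by simp⟩), ?_⟩
    rw [mul_comm, ← div_eq_mul_inv]
    refine (ENNReal.div_lt_iff (Or.inl (by simp)) (Or.inr hT)).2 ?_
    rw [one_mul]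
    exact ENNReal.lt_add_right hT one_ne_zero
  have hθt : θ ≠ ⊤ := by
    rintro rfl
    rw [ENNReal.top_mul] at hθ
    · simp at hθ
    · intro h
      rw [ENNReal.tsum_eq_zero] at h
      exact rr_rpow_ne_zero 0 δ (h 0)
  refine ⟨2 ^ s / θ, ENNReal.div_ne_top (by simp [ENNReal.rpow_eq_top_iff]) hθ0, ?_⟩
  intro ι κ F c D hκ hF hD
  classical
  let ck : ℕ → ι → ℝ≥0∞ := fun k i => if κ i = k then c i else 0
  let v : ℕ → ℝ≥0∞ := fun k => θ * rr k ^ δ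
  let Dk : ℕ → Set Z := fun k => {x | x ∈ D ∧ v (k + 1) ≤ ∑' i, (F i).indicator (fun _ => ck (k + 1) i) x}
  have hsplit : ∀ x, ∑' i, (F i).indicator (fun _ => c i) x
      = ∑' k, ∑' i, (F i).indicator (fun _ => ck k i) x := by
    intro x
    rw [ENNReal.tsum_comm]
    refine tsum_congr fun i => ?_
    rw [tsum_eq_single (κ i)]
    · simp [ck]
    · intro k hk
      simp [ck, Ne.symm hk]
  have hDD : D ⊆ ⋃ k, Dk k := by
    intro x hx
    by_contra hcon
    simp only [mem_iUnion, not_exists, Dk, mem_ofPred_eq, not_and, not_le] at hcon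
    have h1 := hD x hx
    rw [hsplit] at h1
    have h2 : ∑' k, ∑' i, (F i).indicator (fun _ => ck k i) x ≤ ∑' k, v k := by
      refine ENNReal.tsum_le_tsum fun k => ?_
      cases k with
      | zero =>
        have : ∀ i, ck 0 i = 0 := fun i => by
          simp only [ck]; rw [if_neg]; have := hκ i; omega
        simp [this]
      | succ k => exact (hcon k hx).le
    rw [ENNReal.tsum_mul_left] at h2
    exact absurd (h1.trans h2) (not_le.2 hθ)
  have hk : ∀ k, Hc s (Dk k) ≤ 2 ^ s / θ * ((∑' i, ck (k + 1) i) * rr (k + 1) ^ (s - δ)) := by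
    intro k
    have hv0 : v (k + 1) ≠ 0 := mul_ne_zero hθ0 (rr_rpow_ne_zero _ _)
    have hvt : v (k + 1) ≠ ⊤ := ENNReal.mul_ne_top hθt (rr_rpow_ne_top _ _)
    refine (single_scale s k F (ck (k + 1)) (Dk k) (v (k + 1)) hv0 hvt ?_ fun x hx => hx.2).trans ?_
    · intro i hi
      have : κ i = k + 1 := by
        by_contra h
        simp [ck, h] at hi
      rw [← this]; exact hF i
    · apply le_of_eq
      rw [← rr_succ k, ENNReal.mul_rpow_of_ne_top (by simp) (rr_ne_top _),
        ENNReal.rpow_sub _ _ (rr_ne_zero _) (rr_ne_top _)]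
      simp only [v, div_eq_mul_inv]
      rw [ENNReal.mul_inv (Or.inl hθ0) (Or.inl hθt)]
      ring
  calc Hc s D ≤ Hc s (⋃ k, Dk k) := measure_mono hDD
    _ ≤ ∑' k, Hc s (Dk k) := measure_iUnion_le _
    _ ≤ ∑' k, 2 ^ s / θ * ((∑' i, ck (k + 1) i) * rr (k + 1) ^ (s - δ)) := ENNReal.tsum_le_tsum hk
    _ = 2 ^ s / θ * ∑' k, ((∑' i, ck (k + 1) i) * rr (k + 1) ^ (s - δ)) := ENNReal.tsum_mul_left
    _ ≤ 2 ^ s / θ * ∑' k, ((∑' i, ck k i) * rr k ^ (s - δ)) := by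
        refine mul_le_mul_right ?_ _
        exact ENNReal.tsum_comp_le_tsum_of_injective (add_left_injective 1)
          (fun k => (∑' i, ck k i) * rr k ^ (s - δ))
    _ = 2 ^ s / θ * ∑' i, c i * rr (κ i) ^ (s - δ) := by
        congr 1
        simp_rw [← ENNReal.tsum_mul_right]
        rw [ENNReal.tsum_comm]
        refine tsum_congr fun i => ?_
        rw [tsum_eq_single (κ i)]
        · simp [ck]
        · intro k hk
          simp [ck, Ne.symm hk]


section inc

variable {Z : Type*} [MetricSpace Z]

lemma exists_sorted_cover {s : ℝ} (hs : 0 < s) {A : Set Z} {c : ℝ≥0∞} (hc : c ≠ ⊤)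
    (h : Hc s A < c) :
    ∃ (m : ℕ → ℕ) (F : ℕ → ℕ → Set Z), (∀ k j, ediam (F k j) ≤ rr k) ∧
      (∀ x ∈ A, ∃ k, ∃ j < m k, x ∈ F k j) ∧ ∑' k, (m k : ℝ≥0∞) * rr k ^ s ≤ c := by
  classical
  obtain ⟨F, κ, hAF, hdiam, hsum⟩ := exists_cover hs h
  let I : ℕ → Set ℕ := fun k => {i | κ i = k}
  have hsumk : ∑' k, ∑' i : I k, rr k ^ s = ∑' i, rr (κ i) ^ s := by
    have : ∀ k, ∑' i : I k, rr k ^ s = ∑' i, (I k).indicator (fun _ => rr k ^ s) i := fun k =>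
      tsum_subtype (I k) (fun _ => rr k ^ s)
    simp_rw [this]
    rw [ENNReal.tsum_comm]
    refine tsum_congr fun i => ?_
    rw [tsum_eq_single (κ i)]
    · simp [I]
    · intro k hk
      simp [I, Ne.symm hk]
  have hfin : ∀ k, (I k).Finite := by
    intro k
    by_contra hinf
    have : Infinite (I k) := Set.infinite_coe_iff.2 hinf
    have h1 : ∑' i : I k, rr k ^ s ≤ ∑' k, ∑' i : I k, rr k ^ s :=
      ENNReal.le_tsum (f := fun k => ∑' i : I k, rr k ^ s) k
    rw [ENNReal.tsum_const_eq_top_of_ne_zero (rr_rpow_ne_zero _ _), hsumk] at h1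
    exact (hsum.trans_le le_top).not_ge h1
  let e := fun k => (hfin k).toFinset.equivFin
  let m : ℕ → ℕ := fun k => (hfin k).toFinset.card
  refine ⟨m, fun k j => if h : j < m k then F ((e k).symm ⟨j, h⟩) else ∅, ?_, ?_, ?_⟩
  · intro k j
    dsimp only
    split_ifs with hj
    · have := ((e k).symm ⟨j, hj⟩).2
      rw [Set.Finite.mem_toFinset] at this
      have h2 : κ ((e k).symm ⟨j, hj⟩) = k := this
      have := hdiam ((e k).symm ⟨j, hj⟩)
      rwa [h2] at this
    · simp
  · intro x hx
    obtain ⟨i, hi⟩ := mem_iUnion.1 (hAF hx)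
    have hmem : i ∈ (hfin (κ i)).toFinset := by simp [I]
    refine ⟨κ i, (e (κ i) ⟨i, hmem⟩), (e (κ i) ⟨i, hmem⟩).2, ?_⟩
    simpa [m] using hi
  · rw [← hsumk] at hsum
    refine le_trans (le_of_eq ?_) hsum.le
    refine tsum_congr fun k => ?_
    rw [ENNReal.tsum_set_const, (hfin k).encard_eq_coe_toFinset_card]
    simp [m]

lemma null_part {s s' : ℝ} (hss : s < s') {c : ℝ≥0∞} (hc : c ≠ ⊤) (m : ℕ → ℕ → ℕ)
    (F : ℕ → ℕ → ℕ → Set Z) (hF : ∀ n k j, ediam (F n k j) ≤ rr k)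
    (hcost : ∀ n, ∑' k, (m n k : ℝ≥0∞) * rr k ^ s ≤ c) (D : Set Z)
    (hsel : ∀ K, ∃ T : ℕ, ∃ n : ℕ → ℕ, ∀ x ∈ D, ∀ I : Finset ℕ,
      (∀ i ∈ I, ¬ ∃ k ≥ K, ∃ j < m (n i) k, x ∈ F (n i) k j) → I.card ≤ T) :
    Hc s' D = 0 := by
  classical
  set δ := (s' - s) / 2 with hδd
  have hδ : 0 < δ := by linarith
  obtain ⟨C, hC, hW⟩ := weighted_le (Z := Z) s' δ hδ
  have key : ∀ K, 1 ≤ K → Hc s' D ≤ C * (2 * c * rr K ^ δ) := by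
    intro K hK
    obtain ⟨T, n, hn⟩ := hsel K
    let R := 2 * T + 1
    let w : ℝ≥0∞ := ((T + 1 : ℕ) : ℝ≥0∞)⁻¹
    let ok : ℕ × ℕ × ℕ → Prop := fun p => p.1 < R ∧ K ≤ p.2.1 ∧ p.2.2 < m (n p.1) p.2.1
    refine (hW (fun p : ℕ × ℕ × ℕ => max p.2.1 K) (fun p => if ok p then F (n p.1) p.2.1 p.2.2 else ∅)
      (fun p => if ok p then w else 0) D ?_ ?_ ?_).trans ?_
    · intro p
      exact hK.trans (le_max_right _ _)
    · intro p
      by_cases hp : ok p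
      · simp only [hp, if_true]
        rw [max_eq_left hp.2.1]
        exact hF _ _ _
      · simp [hp]
    · intro x hx
      let good : ℕ → Prop := fun i => ∃ k ≥ K, ∃ j < m (n i) k, x ∈ F (n i) k j
      let I := (Finset.range R).filter fun i => ¬ good i
      let J := (Finset.range R).filter good
      have hI : I.card ≤ T := hn x hx I fun i hi => (Finset.mem_filter.1 hi).2
      have hJ : T + 1 ≤ J.card := by
        have : J.card + I.card = R := by
          rw [Finset.card_filter_add_card_filter_not]; simp
        omega
      have hg : ∀ i, ∃ q : ℕ × ℕ, good i → K ≤ q.1 ∧ q.2 < m (n i) q.1 ∧ x ∈ F (n i) q.1 q.2 := by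
        intro i
        by_cases h : good i
        · obtain ⟨k, hk, j, hj, hx⟩ := h
          exact ⟨(k, j), fun _ => ⟨hk, hj, hx⟩⟩
        · exact ⟨0, fun h' => absurd h' h⟩
      choose q hq using hg
      have hinj : Function.Injective (fun i => (i, q i)) := fun a b h => (Prod.ext_iff.1 h).1
      calc (1 : ℝ≥0∞) = (T + 1 : ℕ) * w := (ENNReal.mul_inv_cancel (by simp) (by simp)).symm
        _ ≤ J.card * w := by gcongr
        _ = ∑ i ∈ J, w := by simp
        _ = ∑ p ∈ J.map ⟨_, hinj⟩, w := by simp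
        _ ≤ ∑ p ∈ J.map ⟨_, hinj⟩, (if ok p then F (n p.1) p.2.1 p.2.2 else ∅).indicator
              (fun _ => if ok p then w else 0) x := by
            refine Finset.sum_le_sum fun p hp => ?_
            obtain ⟨i, hi, rfl⟩ := Finset.mem_map.1 hp
            have h1 := Finset.mem_filter.1 hi
            have h2 := hq i h1.2
            have hok : ok (i, q i) := ⟨Finset.mem_range.1 h1.1, h2.1, h2.2.1⟩
            simp [hok, h2.2.2]
        _ ≤ _ := ENNReal.sum_le_tsum _
    · refine mul_le_mul_right ?_ _
      rw [ENNReal.tsum_prod' (f := fun p : ℕ × ℕ × ℕ => (if ok p then w else 0) * rr (max p.2.1 K) ^ (s' - δ))]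
      have h1 : ∀ i, ∑' q : ℕ × ℕ, (if ok (i, q) then w else 0) * rr (max q.1 K) ^ (s' - δ)
          ≤ if i < R then w * rr K ^ δ * c else 0 := by
        intro i
        rw [ENNReal.tsum_prod' (f := fun q : ℕ × ℕ => (if ok (i, q) then w else 0) * rr (max q.1 K) ^ (s' - δ))]
        by_cases hi : i < R
        · rw [if_pos hi]
          refine le_trans ?_ (mul_le_mul_right (hcost (n i)) _)
          rw [← ENNReal.tsum_mul_left]
          refine ENNReal.tsum_le_tsum fun k => ?_
          by_cases hk : K ≤ k
          · simp only [max_eq_left hk]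
            rw [tsum_eq_sum (s := Finset.range (m (n i) k))]
            · calc _ = ∑ j ∈ Finset.range (m (n i) k), w * rr k ^ (s' - δ) := by
                    refine Finset.sum_congr rfl fun j hj => ?_
                    have : ok (i, k, j) := ⟨hi, hk, Finset.mem_range.1 hj⟩
                    simp [this]
                _ = m (n i) k * (w * (rr k ^ δ * rr k ^ s)) := by
                    rw [← ENNReal.rpow_add _ _ (rr_ne_zero _) (rr_ne_top _)]
                    have : s' - δ = δ + s := by rw [hδd]; ring
                    simp [this]
                _ ≤ m (n i) k * (w * (rr K ^ δ * rr k ^ s)) := by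
                    gcongr
                    exact rr_anti hk
                _ = _ := by ring
            · intro j hj
              have : ¬ ok (i, k, j) := fun h => hj (Finset.mem_range.2 h.2.2)
              simp [this]
          · have : ∀ j, ¬ ok (i, k, j) := fun j h => hk h.2.1
            simp [this]
        · have : ∀ q, ¬ ok (i, q) := fun j h => hi h.1
          simp [this]
      refine (ENNReal.tsum_le_tsum h1).trans ?_
      rw [tsum_eq_sum (s := Finset.range R) (fun i hi => if_neg (by simpa using hi))]
      calc _ = ∑ i ∈ Finset.range R, w * rr K ^ δ * c :=
            Finset.sum_congr rfl fun i hi => if_pos (Finset.mem_range.1 hi)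
        _ = ((R : ℝ≥0∞) * w) * (rr K ^ δ * c) := by simp; ring
        _ ≤ 2 * (rr K ^ δ * c) := by
            gcongr
            have : (R : ℝ≥0∞) ≤ 2 * (T + 1 : ℕ) := by
              exact_mod_cast (by omega : R ≤ 2 * (T + 1))
            calc (R : ℝ≥0∞) * w ≤ 2 * (T + 1 : ℕ) * w := by gcongr
              _ = 2 := by rw [mul_assoc, ENNReal.mul_inv_cancel (by simp) (by simp), mul_one]
        _ = _ := by ring
  have hlim : Tendsto (fun K => C * (2 * c * rr K ^ δ)) atTop (𝓝 (C * (2 * c * 0))) := by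
    refine ENNReal.Tendsto.const_mul (ENNReal.Tendsto.const_mul (rr_rpow_tendsto hδ) (Or.inr ?_)) (Or.inr hC)
    exact ENNReal.mul_ne_top (by simp) hc
  have := ge_of_tendsto hlim (eventually_atTop.2 ⟨1, key⟩)
  simpa using this

lemma hi_cost {s s' : ℝ} (hss : s < s') : ∃ K0 : ℕ, ∀ k ≥ K0, ∀ G : Set Z,
    ediam G ≤ 4 * rr k → Hc s' G ≤ rr k ^ s := by
  have hlim : Tendsto (fun k => (4 : ℝ≥0∞) ^ s' * rr k ^ (s' - s)) atTop (𝓝 (4 ^ s' * 0)) :=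
    ENNReal.Tendsto.const_mul (rr_rpow_tendsto (by linarith)) (Or.inr (by simp [ENNReal.rpow_eq_top_iff]))
  rw [mul_zero] at hlim
  obtain ⟨K, hK⟩ := eventually_atTop.1 (hlim.eventually (gt_mem_nhds zero_lt_one))
  refine ⟨K + 2, fun k hk G hG => ?_⟩
  obtain ⟨l, rfl⟩ : ∃ l, k = l + 2 := ⟨k - 2, by omega⟩
  have h4 : 4 * rr (l + 2) = rr l := by
    rw [← rr_succ l, ← rr_succ (l + 1), ← mul_assoc]; norm_num
  refine (Hc_le (h4 ▸ hG)).trans ?_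
  have hlt := (hK (l + 2) (by omega)).le
  calc rr l ^ s' = 4 ^ s' * rr (l + 2) ^ (s' - s + s) := by
        rw [← h4, ENNReal.mul_rpow_of_ne_top (by simp) (rr_ne_top _)]; ring_nf
    _ = 4 ^ s' * rr (l + 2) ^ (s' - s) * rr (l + 2) ^ s := by
        rw [ENNReal.rpow_add _ _ (rr_ne_zero _) (rr_ne_top _), mul_assoc]
    _ ≤ 1 * rr (l + 2) ^ s := by gcongr
    _ = _ := one_mul _

lemma inc_lemma [SecondCountableTopology Z] {s s' : ℝ} (hs : 0 < s) (hss : s < s')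
    (A : ℕ → Set Z) (hA : Monotone A) {c : ℝ≥0∞} (hc : c ≠ ⊤) (h : ∀ n, Hc s (A n) < c) :
    Hc s' (⋃ n, A n) ≤ c := by
  classical
  choose m F hF hcov hcost using fun n => exists_sorted_cover hs hc (h n)
  let U : Ultrafilter ℕ := hyperfilter ℕ
  have hU : ∀ N : ℕ, ∀ᶠ n in (U : Filter ℕ), N ≤ n := by
    intro N
    have : (U : Filter ℕ) ≤ atTop := Nat.hyperfilter_le_atTop
    exact this (eventually_ge_atTop N)
  -- limiting multiplicities
  have hm : ∀ k, ∃ mk, ∀ᶠ n in (U : Filter ℕ), m n k = mk := by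
    intro k
    obtain ⟨B, hB⟩ := ENNReal.exists_nat_gt (ENNReal.div_ne_top hc (rr_rpow_ne_zero k s))
    have hb : ∀ n, m n k ∈ Set.Iic B := by
      intro n
      have h1 : (m n k : ℝ≥0∞) * rr k ^ s ≤ c :=
        (ENNReal.le_tsum (f := fun k => (m n k : ℝ≥0∞) * rr k ^ s) k).trans (hcost n)
      rw [← ENNReal.le_div_iff_mul_le (Or.inl (rr_rpow_ne_zero _ _)) (Or.inl (rr_rpow_ne_top _ _))] at h1
      have := h1.trans_lt hB
      exact (Nat.cast_lt.1 this).le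
    have := (Ultrafilter.eventually_exists_mem_iff (f := U) (P := fun b n => m n k = b)
      (Set.finite_Iic B)).1 (Eventually.of_forall fun n => ⟨m n k, hb n, rfl⟩)
    obtain ⟨b, -, hb⟩ := this
    exact ⟨b, hb⟩
  choose mm hmm using hm
  have hmmK : ∀ K, ∀ᶠ n in (U : Filter ℕ), ∀ k ∈ Finset.range K, m n k = mm k := fun K =>
    (eventually_all_finset _).2 fun k _ => hmm k
  have hmcost : ∑' k, (mm k : ℝ≥0∞) * rr k ^ s ≤ c := by
    refine ENNReal.tsum_le_of_sum_range_le fun K => ?_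
    obtain ⟨n, hn⟩ := (hmmK K).exists
    calc _ = ∑ k ∈ Finset.range K, (m n k : ℝ≥0∞) * rr k ^ s :=
          Finset.sum_congr rfl fun k hk => by rw [hn k hk]
      _ ≤ _ := (ENNReal.sum_le_tsum _).trans (hcost n)
  obtain ⟨K0, hK0⟩ := hi_cost (Z := Z) hss
  -- low limits
  let L : ℕ → ℕ → Set Z := fun k j =>
    {x | ∀ V ∈ 𝓝 x, ∀ᶠ n in (U : Filter ℕ), (F n k j ∩ V).Nonempty}
  have hL : ∀ k j, ediam (L k j) ≤ rr k := by
    intro k j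
    refine ediam_le fun x hx y hy => ?_
    refine ENNReal.le_of_forall_pos_le_add fun ε hε _ => ?_
    have hε2 : (0 : ℝ≥0∞) < (ε : ℝ≥0∞) / 2 := by simpa using hε.ne'
    obtain ⟨n, ⟨a, haF, ha⟩, ⟨b, hbF, hb⟩⟩ := ((hx _ (eball_mem_nhds x hε2)).and
      (hy _ (eball_mem_nhds y hε2))).exists
    rw [mem_eball] at ha hb
    calc edist x y ≤ edist x a + edist a b + edist b y := edist_triangle4 _ _ _ _
      _ ≤ ε / 2 + rr k + ε / 2 := by
          gcongr
          · rw [edist_comm]; exact ha.le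
          · exact edist_le_of_ediam_le haF hbF (hF n k j)
      _ = rr k + (ε / 2 + ε / 2) := by ring
      _ = _ := by rw [ENNReal.add_halves]
  -- high limits
  have hG : ∀ k j, ∃ G : Set Z, ediam G ≤ 4 * rr k ∧ ((∀ᶠ n in (U : Filter ℕ), F n k j ⊆ G) ∨
      ∀ n0, ∀ᶠ n in (U : Filter ℕ), Disjoint (F n0 k j) (F n k j)) := by
    intro k j
    by_cases hd : ∀ n0, ∀ᶠ n in (U : Filter ℕ), Disjoint (F n0 k j) (F n k j)
    · exact ⟨∅, by simp, Or.inr hd⟩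
    · push Not at hd
      obtain ⟨n0, hn0⟩ := hd
      have hn0' : ∀ᶠ n in (U : Filter ℕ), ¬ Disjoint (F n0 k j) (F n k j) := hn0
      refine ⟨{y | ∃ x ∈ F n0 k j, edist x y ≤ rr k}, ?_, Or.inl ?_⟩
      · refine ediam_le ?_
        rintro a ⟨x, hx, hxa⟩ b ⟨y, hy, hyb⟩
        calc edist a b ≤ edist a x + edist x y + edist y b := edist_triangle4 _ _ _ _
          _ ≤ rr k + rr k + rr k := by
              gcongr
              · rw [edist_comm]; exact hxa
              · exact edist_le_of_ediam_le hx hy (hF n0 k j)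
          _ ≤ rr k + rr k + rr k + rr k := le_self_add
          _ = 4 * rr k := by ring
      · filter_upwards [hn0'] with n hn y hy
        obtain ⟨x, hx, hx'⟩ := Set.not_disjoint_iff.1 hn
        exact ⟨x, hx, edist_le_of_ediam_le hx' hy (hF n k j)⟩
  choose G hGd hGc using hG
  let W : ℕ → ℕ → Set Z := fun k j => if k < K0 then L k j else G k j
  have hW : ∀ k j, Hc s' (W k j) ≤ rr k ^ s := by
    intro k j
    by_cases hk : k < K0
    · simp only [W, hk, if_true]
      exact (Hc_le (hL k j)).trans (rr_rpow_anti_exp k hss.le)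
    · simp only [W, hk, if_false]
      exact hK0 k (not_lt.1 hk) _ (hGd k j)
  let WW : Set Z := ⋃ k, ⋃ j ∈ Finset.range (mm k), W k j
  have hWW : Hc s' WW ≤ c := by
    refine (measure_iUnion_le _).trans (le_trans (ENNReal.tsum_le_tsum fun k => ?_) hmcost)
    refine (measure_biUnion_finset_le _ _).trans ?_
    calc _ ≤ ∑ j ∈ Finset.range (mm k), rr k ^ s := Finset.sum_le_sum fun j _ => hW k j
      _ = _ := by simp
  -- the exceptional set
  let E : Set Z := (⋃ n, A n) \ WW
  let good : Set Z → Prop := fun V => ∀ᶠ n in (U : Filter ℕ), ∀ k ∈ Finset.range K0,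
    ∀ j ∈ Finset.range (mm k), Disjoint (F n k j) V
  have hnull : ∀ N V, good V → Hc s' (E ∩ A N ∩ V) = 0 := by
    intro N V hV
    refine null_part hss hc m F hF hcost _ fun K => ?_
    let P : ℕ → Prop := fun n => N ≤ n ∧ (∀ k ∈ Finset.range K0,
      ∀ j ∈ Finset.range (mm k), Disjoint (F n k j) V) ∧ (∀ k ∈ Finset.range K, m n k = mm k) ∧
      ∀ k ∈ Finset.range K, ∀ j ∈ Finset.range (mm k), (∀ᶠ n in (U : Filter ℕ), F n k j ⊆ G k j) →
        F n k j ⊆ G k j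
    let Q : ℕ → ℕ → Prop := fun n0 n => ∀ k ∈ Finset.range K, ∀ j ∈ Finset.range (mm k),
      (¬ ∀ᶠ n in (U : Filter ℕ), F n k j ⊆ G k j) → Disjoint (F n0 k j) (F n k j)
    have hP : ∀ᶠ n in (U : Filter ℕ), P n := by
      refine (hU N).and (hV.and ((hmmK K).and ?_))
      refine (eventually_all_finset _).2 fun k _ => (eventually_all_finset _).2 fun j _ => ?_
      by_cases h1 : ∀ᶠ n in (U : Filter ℕ), F n k j ⊆ G k j
      · filter_upwards [h1] with n hn _ using hn
      · exact Eventually.of_forall fun n h2 => absurd h2 h1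
    have hQ : ∀ n0, ∀ᶠ n in (U : Filter ℕ), Q n0 n := by
      intro n0
      refine (eventually_all_finset _).2 fun k _ => (eventually_all_finset _).2 fun j _ => ?_
      by_cases h1 : ∀ᶠ n in (U : Filter ℕ), F n k j ⊆ G k j
      · exact Eventually.of_forall fun n h2 => absurd h1 h2
      · have := (hGc k j).resolve_left h1 n0
        filter_upwards [this] with n hn _ using hn
    obtain ⟨f, hfP, hfQ⟩ := exists_seq_of_forall_finset_exists P Q fun S _ => by
      have := hP.and ((eventually_all_finset S).2 fun n0 _ => hQ n0)
      obtain ⟨y, hy⟩ := this.exists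
      exact ⟨y, hy.1, hy.2⟩
    refine ⟨∑ k ∈ Finset.range K, mm k, f, ?_⟩
    rintro x ⟨⟨⟨-, hxW⟩, hxN⟩, hxV⟩ I hI
    have hex : ∀ i, ∃ q : Σ _ : ℕ, ℕ, i ∈ I → q.1 < K ∧ q.2 < mm q.1 ∧ x ∈ F (f i) q.1 q.2 := by
      intro i
      by_cases hi : i ∈ I
      · obtain ⟨k, j, hj, hx⟩ := hcov (f i) x (hA (hfP i).1 hxN)
        have hk : k < K := by
          by_contra hk
          exact hI i hi ⟨k, not_lt.1 hk, j, hj, hx⟩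
        refine ⟨⟨k, j⟩, fun _ => ⟨hk, ?_, hx⟩⟩
        rw [← (hfP i).2.2.1 k (Finset.mem_range.2 hk)]
        exact hj
      · exact ⟨⟨0, 0⟩, fun h => absurd h hi⟩
    choose q hq using hex
    have hcase : ∀ i ∈ I, ¬ ∀ᶠ n in (U : Filter ℕ), F n (q i).1 (q i).2 ⊆ G (q i).1 (q i).2 := by
      intro i hi hcon
      obtain ⟨hk, hj, hx⟩ := hq i hi
      have hxG := (hfP i).2.2.2 _ (Finset.mem_range.2 hk) _ (Finset.mem_range.2 hj) hcon hx
      by_cases hlow : (q i).1 < K0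
      · exact Set.disjoint_left.1 ((hfP i).2.1 _ (Finset.mem_range.2 hlow) _ (Finset.mem_range.2 hj)) hx hxV
      · apply hxW
        refine mem_iUnion.2 ⟨(q i).1, mem_iUnion₂.2 ⟨(q i).2, Finset.mem_range.2 hj, ?_⟩⟩
        simp only [W, hlow, if_false]
        exact hxG
    have hne : ∀ i ∈ I, ∀ i' ∈ I, i < i' → q i ≠ q i' := by
      intro i hi i' hi' hlt heq
      obtain ⟨hk, hj, hx⟩ := hq i hi
      obtain ⟨-, -, hx'⟩ := hq i' hi'
      rw [← heq] at hx'
      exact Set.disjoint_left.1 (hfQ i i' hlt _ (Finset.mem_range.2 hk) _ (Finset.mem_range.2 hj)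
        (hcase i hi)) hx hx'
    have hcard := Finset.card_le_card_of_injOn (s := I)
      (t := (Finset.range K).sigma fun k => Finset.range (mm k)) q
      (fun i hi => Finset.mem_sigma.2 ⟨Finset.mem_range.2 (hq i hi).1, Finset.mem_range.2 (hq i hi).2.1⟩)
      (fun i hi i' hi' heq => by
        rcases lt_trichotomy i i' with hlt | he | hlt
        · exact absurd heq (hne i hi i' hi' hlt)
        · exact he
        · exact absurd heq.symm (hne i' hi' i hi hlt))
    rw [Finset.card_sigma] at hcard
    simpa using hcard
  have hEsub : E ⊆ ⋃ N : ℕ, ⋃ V ∈ {V ∈ TopologicalSpace.countableBasis Z | good V}, (E ∩ A N ∩ V) := by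
    intro x hx
    obtain ⟨N, hN⟩ := mem_iUnion.1 hx.1
    have h1 : ∀ k ∈ Finset.range K0, ∀ j ∈ Finset.range (mm k), ∃ V ∈ 𝓝 x,
        ∀ᶠ n in (U : Filter ℕ), Disjoint (F n k j) V := by
      intro k hk j hj
      have hxL : x ∉ L k j := by
        intro hxL
        apply hx.2
        refine mem_iUnion.2 ⟨k, mem_iUnion₂.2 ⟨j, hj, ?_⟩⟩
        simpa only [W, Finset.mem_range.1 hk, if_true] using hxL
      have : ∃ V ∈ 𝓝 x, ¬ ∀ᶠ n in (U : Filter ℕ), (F n k j ∩ V).Nonempty := by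
        by_contra hcon
        push Not at hcon
        exact hxL hcon
      obtain ⟨V, hV, hV'⟩ := this
      refine ⟨V, hV, ?_⟩
      filter_upwards [Ultrafilter.eventually_not.2 hV'] with n hn
      rwa [Set.not_nonempty_iff_eq_empty, ← Set.disjoint_iff_inter_eq_empty] at hn
    have h2 : ∃ V ∈ 𝓝 x, good V := by
      have : ∀ k, ∃ V ∈ 𝓝 x, k ∈ Finset.range K0 → ∀ᶠ n in (U : Filter ℕ),
          ∀ j ∈ Finset.range (mm k), Disjoint (F n k j) V := by
        intro k
        by_cases hk : k ∈ Finset.range K0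
        · choose! V hV hV' using h1 k hk
          refine ⟨⋂ j ∈ Finset.range (mm k), V j, (biInter_finset_mem _).2 hV, fun _ => ?_⟩
          refine (eventually_all_finset _).2 fun j hj => ?_
          filter_upwards [hV' j hj] with n hn
          exact hn.mono_right (Set.biInter_subset_of_mem hj)
        · exact ⟨univ, univ_mem, fun h => absurd h hk⟩
      choose V hV hV' using this
      refine ⟨⋂ k ∈ Finset.range K0, V k, (biInter_finset_mem _).2 fun k _ => hV k, ?_⟩
      refine (eventually_all_finset _).2 fun k hk => ?_
      filter_upwards [hV' k hk] with n hn j hj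
      exact (hn j hj).mono_right (Set.biInter_subset_of_mem hk)
    obtain ⟨V, hV, hgV⟩ := h2
    obtain ⟨b, hb, hxb, hbV⟩ := (TopologicalSpace.isBasis_countableBasis Z).mem_nhds_iff.1 hV
    refine mem_iUnion.2 ⟨N, mem_iUnion₂.2 ⟨b, ⟨hb, ?_⟩, ⟨⟨hx, hN⟩, hxb⟩⟩⟩
    filter_upwards [hgV] with n hn k hk j hj
    exact (hn k hk j hj).mono_right hbV
  have hE : Hc s' E = 0 := by
    refine measure_mono_null hEsub ?_
    refine measure_iUnion_null fun N => ?_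
    refine (measure_biUnion_null_iff ((TopologicalSpace.countable_countableBasis Z).mono
      (Set.sep_subset _ _))).2 fun V hV => hnull N V hV.2
  calc Hc s' (⋃ n, A n) ≤ Hc s' (WW ∪ E) := measure_mono (by rw [Set.union_sdiff_self]; exact subset_union_right)
    _ ≤ Hc s' WW + Hc s' E := measure_union_le _ _
    _ ≤ c := by rw [hE, add_zero]; exact hWW

end inc


lemma inc_exists {Z : Type*} [MetricSpace Z] [SecondCountableTopology Z] {s s' : ℝ} (hs : 0 < s)
    (hss : s < s') (A : ℕ → Set Z) (hA : Monotone A) {c : ℝ≥0∞} (h : c < Hc s' (⋃ n, A n)) :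
    ∃ n, c < Hc s (A n) := by
  by_contra hcon
  push Not at hcon
  obtain ⟨c', h1, h2⟩ := exists_between h
  exact absurd (inc_lemma hs hss A hA (h2.trans_le le_top).ne (fun n => (hcon n).trans_lt h1))
    (not_le.2 h2)

/-- Box of sequences whose first `m` terms are bounded by `φ`. -/
def box (φ : ℕ → ℕ) (m : ℕ) : Set (ℕ → ℕ) := {σ | ∀ i < m, σ i ≤ φ i}

lemma box_congr {φ ψ : ℕ → ℕ} {m : ℕ} (h : ∀ i < m, φ i = ψ i) : box φ m = box ψ m := by
  ext σ
  simp only [box, Set.mem_ofPred_eq]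
  exact forall₂_congr fun i hi => by rw [h i hi]

lemma box_succ (φ : ℕ → ℕ) (m : ℕ) : box φ m = ⋃ n, box (Function.update φ m n) (m + 1) := by
  ext σ
  simp only [box, Set.mem_iUnion, Set.mem_ofPred_eq]
  constructor
  · intro h
    refine ⟨σ m, fun i hi => ?_⟩
    rcases (Nat.lt_succ_iff_lt_or_eq.1 hi) with h1 | h1
    · rw [Function.update_of_ne h1.ne]; exact h i h1
    · subst h1; simp
  · rintro ⟨n, h⟩ i hi
    have := h i (hi.trans (Nat.lt_succ_self m))
    rwa [Function.update_of_ne hi.ne] at this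

lemma box_mono (φ : ℕ → ℕ) (m : ℕ) : Monotone fun n => box (Function.update φ m n) (m + 1) := by
  intro a b hab σ h i hi
  have := h i hi
  rcases (Nat.lt_succ_iff_lt_or_eq.1 hi) with h1 | h1
  · rw [Function.update_of_ne h1.ne] at this ⊢; exact this
  · subst h1; simp only [Function.update_self] at this ⊢; exact this.trans hab

lemma exists_phi {Z : Type*} [MetricSpace Z] [SecondCountableTopology Z] (f : (ℕ → ℕ) → Z)
    (s : ℕ → ℝ) (hs : ∀ m, 0 < s m) (hss : ∀ m, s (m + 1) < s m) {c : ℝ≥0∞}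
    (h : c < Hc (s 0) (range f)) :
    ∃ φ : ℕ → ℕ, ∀ m, c < Hc (s m) (f '' box φ m) := by
  have step : ∀ m φ, c < Hc (s m) (f '' box φ m) →
      ∃ n, c < Hc (s (m + 1)) (f '' box (Function.update φ m n) (m + 1)) := by
    intro m φ h
    rw [box_succ, Set.image_iUnion] at h
    exact inc_exists (hs _) (hss m) _ (fun a b hab => Set.image_mono (box_mono φ m hab)) h
  choose! n hn using step
  let g : ℕ → ℕ → ℕ := fun m => Nat.rec (fun _ => 0) (fun k φ => Function.update φ k (n k φ)) m
  have g_succ : ∀ m, g (m + 1) = Function.update (g m) m (n m (g m)) := fun m => rfl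
  have hg : ∀ m, c < Hc (s m) (f '' box (g m) m) := by
    intro m
    induction m with
    | zero =>
      have : box (g 0) 0 = univ := by ext; simp [box]
      rw [this, Set.image_univ]; exact h
    | succ m ih => rw [g_succ]; exact hn m _ ih
  have hst : ∀ i m, i < m → g m i = g (i + 1) i := by
    intro i m him
    induction m with
    | zero => omega
    | succ m ih =>
      rcases (Nat.lt_succ_iff_lt_or_eq.1 him) with h1 | h1
      · rw [g_succ, Function.update_of_ne h1.ne, ih h1]
      · rw [h1]
  refine ⟨fun i => g (i + 1) i, fun m => ?_⟩
  rw [← box_congr (fun i hi => hst i m hi)]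
  exact hg m

lemma box_subset_of_open {φ : ℕ → ℕ} {V : Set (ℕ → ℕ)} (hV : IsOpen V)
    (h : (Set.univ.pi fun i => Set.Iic (φ i)) ⊆ V) : ∃ m, box φ m ⊆ V := by
  have hS : IsCompact (Set.univ.pi fun i => Set.Iic (φ i)) :=
    isCompact_univ_pi fun i => (Set.finite_Iic _).isCompact
  have hn : ∀ x ∈ (Set.univ.pi fun i => Set.Iic (φ i)), ∃ n, PiNat.cylinder x n ⊆ V := by
    intro x hx
    obtain ⟨t, ⟨y, n, rfl⟩, hxt, htV⟩ :=
      (PiNat.isTopologicalBasis_cylinders (fun _ : ℕ => ℕ)).mem_nhds_iff.1 (hV.mem_nhds (h hx))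
    refine ⟨n, ?_⟩
    rw [PiNat.mem_cylinder_iff_eq.1 hxt]
    exact htV
  choose! n hn using hn
  obtain ⟨t, htS, ht⟩ := hS.elim_nhds_subcover (fun x => PiNat.cylinder x (n x))
    (fun x _ => (PiNat.isOpen_cylinder _ x (n x)).mem_nhds (PiNat.self_mem_cylinder _ _))
  refine ⟨t.sup n, fun σ hσ => ?_⟩
  have h1 : (fun i => min (σ i) (φ i)) ∈ (Set.univ.pi fun i => Set.Iic (φ i)) := by
    intro i _; simp
  obtain ⟨x, hx, hx2⟩ := Set.mem_iUnion₂.1 (ht h1)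
  refine hn x (htS x hx) ?_
  rw [PiNat.mem_cylinder_iff] at hx2 ⊢
  intro i hi
  rw [← hx2 i hi, min_eq_left]
  exact hσ i (hi.trans_le (Finset.le_sup (f := n) hx))

/-- A compact subset has positive content at a smaller exponent. -/
lemma exists_compact {Z : Type*} [MetricSpace Z] [SecondCountableTopology Z] {X : Set Z}
    (hX : AnalyticSet X) {t s0 : ℝ} (ht : 0 < t) (hts : t < s0) (h : Hc s0 X ≠ 0) :
    ∃ K ⊆ X, IsCompact K ∧ Hc t K ≠ 0 := by
  rw [AnalyticSet] at hX
  rcases hX with rfl | ⟨f, hf, rfl⟩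
  · simp at h
  obtain ⟨c, hc0, hc⟩ := exists_between (pos_iff_ne_zero.2 h)
  have hd : 0 < s0 - t := sub_pos.2 hts
  obtain ⟨φ, hφ⟩ := exists_phi f (fun m => t + (s0 - t) * (1 / 2) ^ m)
    (fun m => by positivity)
    (fun m => by
      have : (0 : ℝ) < (1 / 2) ^ m := by positivity
      have : 0 < (s0 - t) * (1 / 2) ^ m := by positivity
      rw [pow_succ]; nlinarith) (c := c) (by simpa using hc)
  have hS : IsCompact (Set.univ.pi fun i => Set.Iic (φ i)) :=
    isCompact_univ_pi fun i => (Set.finite_Iic _).isCompact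
  refine ⟨f '' (Set.univ.pi fun i => Set.Iic (φ i)), Set.image_subset_range _ _, hS.image hf, ?_⟩
  intro h0
  have hb : (0 : ℝ≥0∞) < min c 1 * rr 1 ^ t :=
    ENNReal.mul_pos (lt_min hc0 one_pos).ne' (rr_rpow_ne_zero _ _)
  obtain ⟨F, κ, hcov, hdiam, hsum⟩ := exists_cover ht (h0.trans_lt hb)
  have hκ : ∀ i, ∃ j, κ i = j + 1 := by
    intro i
    by_contra hcon
    have h2 : κ i = 0 := by
      rcases Nat.eq_zero_or_eq_succ_pred (κ i) with h2 | h2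
      · exact h2
      · exact absurd ⟨_, h2⟩ hcon
    have h1 := (ENNReal.le_tsum (f := fun i => rr (κ i) ^ t) i).trans_lt hsum
    simp only [h2, rr_zero, ENNReal.one_rpow] at h1
    refine absurd h1 (not_lt.2 ?_)
    calc min c 1 * rr 1 ^ t ≤ 1 * 1 := by
          gcongr
          · exact min_le_right _ _
          · exact ENNReal.rpow_le_one (rr_le_one 1) ht.le
      _ = 1 := by simp
  choose j hj using hκ
  -- open enlargement
  let G : ℕ → Set Z := fun i => {y | ∃ x ∈ F i, edist y x < rr (j i + 3)}
  have hGo : ∀ i, IsOpen (G i) := by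
    intro i
    have : G i = ⋃ x ∈ F i, Metric.eball x (rr (j i + 3)) := by
      ext y; simp [G, Metric.mem_eball]
    rw [this]
    exact isOpen_biUnion fun x _ => Metric.isOpen_eball
  have hFG : ∀ i, F i ⊆ G i := fun i x hx =>
    ⟨x, hx, by rw [edist_self]; exact pos_iff_ne_zero.2 (rr_ne_zero _)⟩
  have hGd : ∀ i, ediam (G i) ≤ rr (j i) := by
    intro i
    refine ediam_le ?_
    rintro a ⟨x, hx, hxa⟩ b ⟨y, hy, hyb⟩
    calc edist a b ≤ edist a x + edist x y + edist y b := edist_triangle4 _ _ _ _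
      _ ≤ rr (j i + 3) + rr (j i + 1) + rr (j i + 3) := by
          gcongr
          · have := edist_le_of_ediam_le hx hy (hdiam i)
            rwa [hj] at this
          · rw [edist_comm]; exact hyb.le
      _ = rr (j i + 1) + 2 * rr (j i + 3) := by ring
      _ ≤ rr (j i + 1) + rr (j i + 1) := by
          rw [rr_succ]; gcongr; exact rr_anti (by omega)
      _ = rr (j i) := by rw [← two_mul, rr_succ]
  obtain ⟨m, hm⟩ := box_subset_of_open (φ := φ) ((isOpen_iUnion hGo).preimage hf) (by
    intro σ hσ
    exact Set.iUnion_mono hFG (hcov ⟨σ, hσ, rfl⟩))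
  have h1 : Hc t (f '' box φ m) ≤ ∑' i, rr (j i) ^ t := by
    calc Hc t (f '' box φ m) ≤ Hc t (⋃ i, G i) := measure_mono (Set.image_subset_iff.2 hm)
      _ ≤ ∑' i, Hc t (G i) := measure_iUnion_le _
      _ ≤ _ := ENNReal.tsum_le_tsum fun i => Hc_le (hGd i)
  have h2 : (∑' i, rr (j i) ^ t) * rr 1 ^ t = ∑' i, rr (κ i) ^ t := by
    rw [← ENNReal.tsum_mul_right]
    refine tsum_congr fun i => ?_
    rw [hj, ← ENNReal.mul_rpow_of_nonneg _ _ ht.le]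
    congr 1
    rw [rr, rr, rr, ← pow_add]
  have h3 : ∑' i, rr (j i) ^ t < min c 1 := by
    rw [← h2] at hsum
    exact lt_of_mul_lt_mul_right hsum zero_le
  have h4 := hφ m
  have h5 := Hc_anti (s := t) (t := t + (s0 - t) * (1 / 2) ^ m)
    (by have : 0 < (s0 - t) * (1 / 2) ^ m := by positivity
        linarith) (f '' box φ m)
  exact absurd (h4.trans_le (h5.trans h1)) (not_lt.2 (h3.le.trans (min_le_left _ _)))


lemma exists_functional {E : Type*} [AddCommGroup E] [Module ℝ E] (p : E → ℝ) (e : E)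
    (p_hom : ∀ c : ℝ, 0 < c → ∀ x, p (c • x) = c * p x) (p_add : ∀ x y, p (x + y) ≤ p x + p y)
    (p_nonneg : ∀ x, 0 ≤ p x) (he : e ≠ 0) :
    ∃ L : E →ₗ[ℝ] ℝ, (∀ x, L x ≤ p x) ∧ L e = p e := by
  obtain ⟨g, hg1, hg2⟩ := exists_extension_of_le_sublinear
    (LinearPMap.mkSpanSingleton (K := ℝ) (L := ℝ) (σ := RingHom.id ℝ) e (p e) he) p p_hom p_add (by
      rintro ⟨x, hx⟩
      obtain ⟨a, rfl⟩ := Submodule.mem_span_singleton.1 hx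
      have h1 : (LinearPMap.mkSpanSingleton (K := ℝ) (L := ℝ) (σ := RingHom.id ℝ) e (p e) he) ⟨a • e, hx⟩
          = a * p e := LinearPMap.mkSpanSingleton'_apply _ _ _ a hx
      rw [h1]
      rcases le_or_gt a 0 with ha | ha
      · exact (mul_nonpos_of_nonpos_of_nonneg ha (p_nonneg e)).trans (p_nonneg _)
      · exact (p_hom a ha e).ge)
  refine ⟨g, hg2, ?_⟩
  have := hg1 ⟨e, Submodule.mem_span_singleton_self e⟩
  rw [this]
  exact LinearPMap.mkSpanSingleton_apply ℝ ℝ he (p e)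

section Frostman

variable {Y : Type*} [MetricSpace Y]

/-- Weighted sums of indicator functions of balls. -/
noncomputable def wsum (c : (Y × ℕ) →₀ ℝ≥0) : Y → ℝ :=
  Finsupp.linearCombination ℝ≥0
    (fun i : Y × ℕ => (eball i.1 (rr (i.2 + 2))).indicator (fun _ => (1 : ℝ))) c

/-- Cost of a weighted family of balls. -/
noncomputable def wcost (t : ℝ) (c : (Y × ℕ) →₀ ℝ≥0) : ℝ :=
  Finsupp.linearCombination ℝ≥0 (fun i : Y × ℕ => (rr (i.2 + 1) ^ t).toReal) c

lemma wsum_apply (c : (Y × ℕ) →₀ ℝ≥0) (x : Y) : wsum c x =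
    ∑ i ∈ c.support, (c i : ℝ) * (eball i.1 (rr (i.2 + 2))).indicator (fun _ => (1 : ℝ)) x := by
  rw [wsum, Finsupp.linearCombination_apply, Finsupp.sum, Finset.sum_apply]
  rfl

lemma wcost_eq (t : ℝ) (c : (Y × ℕ) →₀ ℝ≥0) : wcost t c =
    ∑ i ∈ c.support, (c i : ℝ) * (rr (i.2 + 1) ^ t).toReal := by
  rw [wcost, Finsupp.linearCombination_apply, Finsupp.sum]
  rfl

lemma wcost_nonneg (t : ℝ) (c : (Y × ℕ) →₀ ℝ≥0) : 0 ≤ wcost t c := by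
  rw [wcost_eq]; positivity

lemma wsum_nonneg (c : (Y × ℕ) →₀ ℝ≥0) (x : Y) : 0 ≤ wsum c x := by
  rw [wsum_apply]
  refine Finset.sum_nonneg fun i _ => mul_nonneg (by positivity) ?_
  exact Set.indicator_nonneg (fun _ _ => zero_le_one) _

lemma wcost_ofReal (t : ℝ) (c : (Y × ℕ) →₀ ℝ≥0) :
    ENNReal.ofReal (wcost t c) = ∑' i, (c i : ℝ≥0∞) * rr (i.2 + 1) ^ t := by
  rw [wcost_eq, ENNReal.ofReal_sum_of_nonneg (fun _ _ => by positivity),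
    tsum_eq_sum (s := c.support)]
  · refine Finset.sum_congr rfl fun i _ => ?_
    rw [ENNReal.ofReal_mul (by positivity), ENNReal.ofReal_toReal (rr_rpow_ne_top _ _)]
    simp
  · intro i hi
    rw [Finsupp.notMem_support_iff.1 hi]; simp

lemma wsum_ofReal (c : (Y × ℕ) →₀ ℝ≥0) (x : Y) : ENNReal.ofReal (wsum c x) =
    ∑' i, (eball i.1 (rr (i.2 + 2))).indicator (fun _ => (c i : ℝ≥0∞)) x := by
  rw [wsum_apply, ENNReal.ofReal_sum_of_nonneg, tsum_eq_sum (s := c.support)]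
  · refine Finset.sum_congr rfl fun i _ => ?_
    by_cases hx : x ∈ eball i.1 (rr (i.2 + 2))
    · simp only [Set.indicator_of_mem hx]; simp
    · simp only [Set.indicator_of_notMem hx]; simp
  · intro i hi
    rw [Finsupp.notMem_support_iff.1 hi]; simp
  · intro i _
    exact mul_nonneg (by positivity) (Set.indicator_nonneg (fun _ _ => zero_le_one) _)

lemma wcost_lower {t δ : ℝ} (hδ : 0 < δ) (h : Hc t (univ : Set Y) ≠ 0) :
    ∃ ε : ℝ, 0 < ε ∧ ∀ c : (Y × ℕ) →₀ ℝ≥0, (∀ x, 1 ≤ wsum c x) → ε ≤ wcost (t - δ) c := by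
  obtain ⟨C, hC, hw⟩ := weighted_le (Z := Y) t δ hδ
  have key : ∀ c : (Y × ℕ) →₀ ℝ≥0, (∀ x, 1 ≤ wsum c x) →
      Hc t (univ : Set Y) ≤ C * ENNReal.ofReal (wcost (t - δ) c) := by
    intro c hc
    rw [wcost_ofReal]
    refine hw (fun i : Y × ℕ => i.2 + 1) (fun i => eball i.1 (rr (i.2 + 2)))
      (fun i => (c i : ℝ≥0∞)) univ (fun i => by omega) (fun i => ?_) (fun x _ => ?_)
    · refine (Metric.ediam_eball_le).trans ?_
      exact (rr_succ _).le
    · have := ENNReal.ofReal_le_ofReal (hc x)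
      rwa [wsum_ofReal, ENNReal.ofReal_one] at this
  by_cases htop : Hc t (univ : Set Y) = ⊤
  · refine ⟨1, one_pos, fun c hc => ?_⟩
    have := key c hc
    rw [htop] at this
    exact absurd (top_le_iff.1 this) (ENNReal.mul_ne_top hC ENNReal.ofReal_ne_top)
  have hne : Hc t (univ : Set Y) / (C + 1) ≠ 0 := ENNReal.div_ne_zero.2 ⟨h, by simpa using hC⟩
  have hnt : Hc t (univ : Set Y) / (C + 1) ≠ ⊤ := ENNReal.div_ne_top htop (by simp)
  refine ⟨(Hc t (univ : Set Y) / (C + 1)).toReal, ENNReal.toReal_pos hne hnt, fun c hc => ?_⟩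
  refine ENNReal.toReal_le_of_le_ofReal (wcost_nonneg _ _) ?_
  refine ENNReal.div_le_of_le_mul' ((key c hc).trans ?_)
  gcongr
  exact le_self_add

variable [CompactSpace Y]

lemma exists_wsum_ge (M : ℝ≥0) : ∃ c : (Y × ℕ) →₀ ℝ≥0, ∀ x, (M : ℝ) ≤ wsum c x := by
  classical
  obtain ⟨u, _, hu⟩ := isCompact_univ.elim_nhds_subcover (fun x : Y => eball x (rr 2))
    (fun x _ => Metric.eball_mem_nhds _ (pos_iff_ne_zero.2 (rr_ne_zero _)))
  refine ⟨∑ y ∈ u, Finsupp.single (y, 0) M, fun x => ?_⟩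
  obtain ⟨y, hy, hxy⟩ := Set.mem_iUnion₂.1 (hu (Set.mem_univ x))
  have h1 : ∀ z, wsum (Finsupp.single (z, 0) M) x = M * (eball z (rr 2)).indicator (fun _ => (1:ℝ)) x := by
    intro z
    rw [wsum, Finsupp.linearCombination_single]; rfl
  have h2 : wsum (∑ y ∈ u, Finsupp.single (y, 0) M) x = ∑ y ∈ u, wsum (Finsupp.single (y, 0) M) x := by
    simp only [wsum, map_sum, Finset.sum_apply]
  rw [h2]
  refine le_trans ?_ (Finset.single_le_sum (fun z _ => wsum_nonneg _ _) hy)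
  rw [h1, Set.indicator_of_mem hxy, mul_one]

open CompactlySupported

/-- the sublinear functional -/
noncomputable def pp (t : ℝ) (f : C_c(Y, ℝ)) : ℝ :=
  sInf (wcost t '' {c : (Y × ℕ) →₀ ℝ≥0 | ∀ x, f x ≤ wsum c x})

lemma pp_set_nonempty (f : C_c(Y, ℝ)) : {c : (Y × ℕ) →₀ ℝ≥0 | ∀ x, f x ≤ wsum c x}.Nonempty := by
  obtain ⟨M, hM⟩ := (isCompact_range f.continuous).bddAbove
  obtain ⟨c, hc⟩ := exists_wsum_ge (Y := Y) M.toNNReal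
  exact ⟨c, fun x => (hM ⟨x, rfl⟩).trans ((Real.le_coe_toNNReal M).trans (hc x))⟩

lemma pp_le (t : ℝ) {f : C_c(Y, ℝ)} {c : (Y × ℕ) →₀ ℝ≥0} (h : ∀ x, f x ≤ wsum c x) :
    pp t f ≤ wcost t c :=
  csInf_le ⟨0, by rintro _ ⟨c, _, rfl⟩; exact wcost_nonneg _ _⟩ ⟨c, h, rfl⟩

lemma le_pp (t : ℝ) {f : C_c(Y, ℝ)} {a : ℝ}
    (h : ∀ c : (Y × ℕ) →₀ ℝ≥0, (∀ x, f x ≤ wsum c x) → a ≤ wcost t c) : a ≤ pp t f :=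
  le_csInf ((pp_set_nonempty f).image _) (by rintro _ ⟨c, hc, rfl⟩; exact h c hc)

lemma pp_nonneg (t : ℝ) (f : C_c(Y, ℝ)) : 0 ≤ pp t f := le_pp t fun _ _ => wcost_nonneg _ _

lemma pp_add (t : ℝ) (f g : C_c(Y, ℝ)) : pp t (f + g) ≤ pp t f + pp t g := by
  rw [← sub_le_iff_le_add]
  refine le_pp t fun c hc => ?_
  rw [sub_le_comm]
  refine le_pp t fun d hd => ?_
  rw [sub_le_iff_le_add, add_comm (wcost t d)]
  have : wcost t (c + d) = wcost t c + wcost t d := by simp only [wcost, map_add]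
  rw [← this]
  refine pp_le t fun x => ?_
  have : wsum (c + d) x = wsum c x + wsum d x := by simp only [wsum, map_add, Pi.add_apply]
  rw [this]
  exact add_le_add (hc x) (hd x)

lemma pp_smul_le (t : ℝ) {a : ℝ} (ha : 0 < a) (f : C_c(Y, ℝ)) : pp t (a • f) ≤ a * pp t f := by
  rw [← div_le_iff₀' ha]
  refine le_pp t fun c hc => ?_
  rw [div_le_iff₀' ha]
  have h1 : wcost t (a.toNNReal • c) = a * wcost t c := by
    simp only [wcost, map_smul, NNReal.smul_def, Real.coe_toNNReal a ha.le, smul_eq_mul]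
  rw [← h1]
  refine pp_le t fun x => ?_
  have h2 : wsum (a.toNNReal • c) x = a * wsum c x := by
    simp only [wsum, map_smul, Pi.smul_apply, NNReal.smul_def, Real.coe_toNNReal a ha.le, smul_eq_mul]
  rw [h2]
  exact mul_le_mul_of_nonneg_left (hc x) ha.le

lemma pp_smul (t : ℝ) (a : ℝ) (ha : 0 < a) (f : C_c(Y, ℝ)) : pp t (a • f) = a * pp t f := by
  refine le_antisymm (pp_smul_le t ha f) ?_
  have := pp_smul_le t (inv_pos.2 ha) (a • f)
  rw [smul_smul, inv_mul_cancel₀ ha.ne', one_smul] at this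
  rwa [le_inv_mul_iff₀ ha] at this

/-- The constant function one. -/
noncomputable def oneC : C_c(Y, ℝ) :=
  CompactlySupportedContinuousMap.continuousMapEquiv (ContinuousMap.const Y 1)

lemma oneC_apply (x : Y) : (oneC : C_c(Y, ℝ)) x = 1 := rfl

lemma pp_nonpos (t : ℝ) (f : C_c(Y, ℝ)) (hf : ∀ x, f x ≤ 0) : pp t f ≤ 0 := by
  have := pp_le t (f := f) (c := 0) (fun x => (hf x).trans (wsum_nonneg _ _))
  simpa [wcost] using this

lemma pp_one_pos {t δ : ℝ} (hδ : 0 < δ) (h : Hc t (univ : Set Y) ≠ 0) :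
    0 < pp (t - δ) (oneC : C_c(Y, ℝ)) := by
  obtain ⟨ε, hε, hlow⟩ := wcost_lower hδ h
  refine hε.trans_le (le_pp _ fun c hc => hlow c fun x => ?_)
  have := hc x
  rwa [oneC_apply] at this

lemma exists_linfun {t : ℝ} (hp1 : 0 < pp t (oneC : C_c(Y, ℝ))) :
    ∃ L : C_c(Y, ℝ) →ₗ[ℝ] ℝ, (∀ f, L f ≤ pp t f) ∧ 0 < L oneC := by
  have hne : (oneC : C_c(Y, ℝ)) ≠ 0 := by
    intro h0
    rw [h0] at hp1
    exact absurd hp1 (not_lt.2 (pp_nonpos _ 0 fun x => le_rfl))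
  have key := @exists_functional C_c(Y, ℝ) _ _ (pp t) oneC
  have key2 := key (pp_smul t) (pp_add t) (pp_nonneg t) hne
  clear key
  obtain ⟨L, hL, hL1⟩ := key2
  refine ⟨L, hL, ?_⟩
  rw [hL1]
  exact hp1

lemma linfun_pos {t : ℝ} (L : C_c(Y, ℝ) →ₗ[ℝ] ℝ) (hL : ∀ f, L f ≤ pp t f)
    (f : C_c(Y, ℝ)) (hf : 0 ≤ f) : 0 ≤ L f := by
  have h1 := (hL (-f)).trans (pp_nonpos _ (-f) fun x => by
    have : 0 ≤ f x := hf x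
    rw [CompactlySupportedContinuousMap.neg_apply]
    linarith)
  rw [map_neg] at h1
  linarith

lemma exists_posmap (L : C_c(Y, ℝ) →ₗ[ℝ] ℝ) (h : ∀ f : C_c(Y, ℝ), 0 ≤ f → 0 ≤ L f) :
    ∃ Λ : C_c(Y, ℝ) →ₚ[ℝ] ℝ, ∀ f, Λ f = L f := ⟨PositiveLinearMap.mk₀ L h, fun _ => rfl⟩

lemma exists_posfun {t δ : ℝ} (hδ : 0 < δ) (h : Hc t (univ : Set Y) ≠ 0) :
    ∃ Λ : C_c(Y, ℝ) →ₚ[ℝ] ℝ, (∀ f, Λ f ≤ pp (t - δ) f) ∧ 0 < Λ oneC := by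
  obtain ⟨L, hL, hL1⟩ := exists_linfun (pp_one_pos hδ h)
  obtain ⟨Λ, hΛ⟩ := exists_posmap L (linfun_pos L hL)
  exact ⟨Λ, fun f => (hΛ f).trans_le (hL f), hL1.trans_eq (hΛ oneC).symm⟩

/-- Frostman's lemma on a compact metric space. -/
lemma frostman [MeasurableSpace Y] [BorelSpace Y] {t δ : ℝ} (hδ : 0 < δ)
    (h : Hc t (univ : Set Y) ≠ 0) :
    ∃ μ : Measure Y, IsFiniteMeasure μ ∧ μ univ ≠ 0 ∧
      ∀ z k, μ (closedEBall z (rr (k + 3))) ≤ rr (k + 1) ^ (t - δ) := by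
  obtain ⟨Λ, hL, hL1⟩ := exists_posfun hδ h
  refine ⟨RealRMK.rieszMeasure Λ, inferInstance, ?_, ?_⟩
  · intro h0
    have h1 := RealRMK.integral_rieszMeasure Λ oneC
    rw [Measure.measure_univ_eq_zero.1 h0, integral_zero_measure] at h1
    exact hL1.ne h1
  · intro z k
    obtain ⟨f, hf0, hf1, hf⟩ := exists_continuous_zero_one_of_isClosed
      (s := (eball z (rr (k + 2)))ᶜ) (t := closedEBall z (rr (k + 3)))
      Metric.isOpen_eball.isClosed_compl Metric.isClosed_closedEBall (by
        rw [Set.disjoint_compl_left_iff_subset]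
        intro y hy
        rw [Metric.mem_closedEBall] at hy
        rw [Metric.mem_eball]
        refine hy.trans_lt ?_
        rw [← rr_succ (k + 2), two_mul]
        exact ENNReal.lt_add_right (rr_ne_top _) (rr_ne_zero _))
    let g : C_c(Y, ℝ) := CompactlySupportedContinuousMap.continuousMapEquiv f
    have hg : ∀ x, g x = f x := fun x => rfl
    refine (RealRMK.rieszMeasure_le_of_eq_one Λ (f := g) (fun x => (hf x).1)
      Metric.isClosed_closedEBall.isCompact (fun x hx => hf1 hx)).trans ?_
    have h2 : Λ g ≤ wcost (t - δ) (Finsupp.single (z, k) 1) := by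
      refine (hL g).trans (pp_le _ fun x => ?_)
      have h3 : wsum (Finsupp.single (z, k) 1) x = (eball z (rr (k + 2))).indicator (fun _ => (1:ℝ)) x := by
        rw [wsum, Finsupp.linearCombination_single, one_smul]
      rw [h3, hg]
      by_cases hx : x ∈ eball z (rr (k + 2))
      · rw [Set.indicator_of_mem hx]; exact (hf x).2
      · rw [Set.indicator_of_notMem hx]; exact (hf0 hx).le
    refine (ENNReal.ofReal_le_ofReal h2).trans ?_
    rw [wcost, Finsupp.linearCombination_single, one_smul, ENNReal.ofReal_toReal (rr_rpow_ne_top _ _)]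

end Frostman


lemma potential_pointwise {s : ℝ} (hs : 0 < s) (d : ℝ≥0∞) :
    d ^ (-s) ≤ rr 3 ^ (-s) + ∑' k, if d ≤ rr (k + 3) then rr (k + 4) ^ (-s) else 0 := by
  by_cases h3 : rr 3 ≤ d
  · refine le_trans ?_ le_self_add
    rw [ENNReal.rpow_neg, ENNReal.rpow_neg]
    exact ENNReal.inv_le_inv.2 (ENNReal.rpow_le_rpow h3 hs.le)
  push Not at h3
  refine le_trans ?_ le_add_self
  rcases eq_or_ne d 0 with rfl | hd
  · have : (⊤ : ℝ≥0∞) = ∑' _ : ℕ, (1 : ℝ≥0∞) := by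
      rw [ENNReal.tsum_const_eq_top_of_ne_zero one_ne_zero]
    refine le_top.trans (this.le.trans (ENNReal.tsum_le_tsum fun k => ?_))
    rw [if_pos zero_le, ENNReal.rpow_neg, ENNReal.one_le_inv]
    exact ENNReal.rpow_le_one (rr_le_one _) hs.le
  · have hex : ∃ k, rr k < d := by
      have h1 := rr_rpow_tendsto one_pos
      simp only [ENNReal.rpow_one] at h1
      exact (h1.eventually (gt_mem_nhds (pos_iff_ne_zero.2 hd))).exists
    classical
    have hk := Nat.find_spec hex
    have hmin := fun m => Nat.find_min hex (m := m)
    have h4 : 4 ≤ Nat.find hex := by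
      by_contra hcon
      push Not at hcon
      have : rr 3 ≤ rr (Nat.find hex) := rr_anti (by omega)
      exact absurd (this.trans_lt hk) (not_lt.2 h3.le)
    obtain ⟨j, hj⟩ := Nat.exists_eq_add_of_le' h4
    have h5 : d ≤ rr (j + 3) := not_lt.1 (hmin (j + 3) (by omega))
    refine le_trans ?_ (ENNReal.le_tsum j)
    rw [if_pos h5, ENNReal.rpow_neg, ENNReal.rpow_neg]
    rw [hj] at hk
    exact ENNReal.inv_le_inv.2 (ENNReal.rpow_le_rpow hk.le hs.le)

lemma energy_lt_top {Y : Type*} [MetricSpace Y] [MeasurableSpace Y] [BorelSpace Y] (μ : Measure Y)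
    [IsFiniteMeasure μ] {s t : ℝ} (hs : 0 < s) (hst : s < t)
    (h : ∀ z k, μ (closedEBall z (rr (k + 3))) ≤ rr (k + 1) ^ t) : energy s μ < ⊤ := by
  have hts : 0 < t - s := sub_pos.2 hst
  let B : ℝ≥0∞ := rr 3 ^ (-s) * μ univ + ∑' k, rr (k + 4) ^ (-s) * rr (k + 1) ^ t
  have hB : B < ⊤ := by
    refine ENNReal.add_lt_top.2 ⟨ENNReal.mul_lt_top (rr_rpow_ne_top _ _).lt_top
      (measure_lt_top _ _), ?_⟩
    have h1 : ∀ k, rr (k + 4) ^ (-s) * rr (k + 1) ^ t = (rr 4 ^ (-s) * rr 1 ^ t) * rr k ^ (t - s) := by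
      intro k
      have h4 : rr (k + 4) = rr k * rr 4 := by rw [rr, rr, rr, pow_add]
      have h5 : rr (k + 1) = rr k * rr 1 := by rw [rr, rr, rr, pow_add]
      rw [h4, h5, ENNReal.mul_rpow_of_ne_zero (rr_ne_zero _) (rr_ne_zero _),
        ENNReal.mul_rpow_of_ne_zero (rr_ne_zero _) (rr_ne_zero _), sub_eq_neg_add,
        ENNReal.rpow_add _ _ (rr_ne_zero _) (rr_ne_top _)]
      ring
    rw [tsum_congr h1]
    rw [ENNReal.tsum_mul_left]
    exact ENNReal.mul_lt_top (ENNReal.mul_lt_top (rr_rpow_ne_top _ _).lt_top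
      (rr_rpow_ne_top _ _).lt_top) (tsum_rr_rpow hts).lt_top
  have hpot : ∀ x, ∫⁻ y, edist x y ^ (-s) ∂μ ≤ B := by
    intro x
    calc ∫⁻ y, edist x y ^ (-s) ∂μ
        ≤ ∫⁻ y, (rr 3 ^ (-s) + ∑' k, (closedEBall x (rr (k + 3))).indicator
            (fun _ => rr (k + 4) ^ (-s)) y) ∂μ := by
          refine lintegral_mono fun y => (potential_pointwise hs _).trans (le_of_eq ?_)
          congr 1
          refine tsum_congr fun k => ?_
          by_cases hy : edist x y ≤ rr (k + 3)
          · rw [if_pos hy, Set.indicator_of_mem]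
            rw [Metric.mem_closedEBall, edist_comm]; exact hy
          · rw [if_neg hy, Set.indicator_of_notMem]
            rw [Metric.mem_closedEBall, edist_comm]; exact hy
      _ = rr 3 ^ (-s) * μ univ + ∑' k, rr (k + 4) ^ (-s) * μ (closedEBall x (rr (k + 3))) := by
          rw [lintegral_add_left measurable_const, lintegral_const, lintegral_tsum]
          · congr 1
            refine tsum_congr fun k => ?_
            rw [lintegral_indicator_const Metric.isClosed_closedEBall.measurableSet]
          · intro k
            exact (measurable_const.indicator Metric.isClosed_closedEBall.measurableSet).aemeasurable
      _ ≤ B := by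
          refine add_le_add le_rfl (ENNReal.tsum_le_tsum fun k => ?_)
          exact mul_le_mul_right (h x k) _
  calc energy s μ ≤ ∫⁻ _, B ∂μ := lintegral_mono hpot
    _ = B * μ univ := lintegral_const _
    _ < ⊤ := ENNReal.mul_lt_top hB (measure_lt_top _ _)

lemma Hc_subtype {Z : Type*} [MetricSpace Z] {t : ℝ} (ht : 0 < t) (K : Set Z) :
    Hc t K ≤ Hc t (univ : Set K) := by
  refine le_of_forall_gt fun c hc => ?_
  obtain ⟨F, κ, hcov, hd, hsum⟩ := exists_cover ht hc
  refine lt_of_le_of_lt ?_ hsum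
  calc Hc t K ≤ Hc t (⋃ i, (Subtype.val '' F i : Set Z)) := by
        refine measure_mono fun x hx => ?_
        obtain ⟨i, hi⟩ := Set.mem_iUnion.1 (hcov (Set.mem_univ (⟨x, hx⟩ : K)))
        exact Set.mem_iUnion.2 ⟨i, _, hi, rfl⟩
    _ ≤ ∑' i, Hc t (Subtype.val '' F i : Set Z) := measure_iUnion_le _
    _ ≤ _ := ENNReal.tsum_le_tsum fun i => Hc_le (by
        rw [isometry_subtype_coe.ediam_image]; exact hd i)

lemma exists_measure {Z : Type*} [MetricSpace Z] [SecondCountableTopology Z]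
    [MeasurableSpace Z] [BorelSpace Z] {X : Set Z} (hX : AnalyticSet X) {s d : ℝ} (hs : 0 < s)
    (hsd : s < d) (h : Hc d X ≠ 0) :
    ∃ μ : Measure Z, μ Xᶜ = 0 ∧ 0 < μ X ∧ μ X < ⊤ ∧ energy s μ < ⊤ := by
  obtain ⟨t', hst', ht'd⟩ := exists_between hsd
  obtain ⟨t, ht't, htd⟩ := exists_between ht'd
  obtain ⟨K, hKX, hK, hKt⟩ := exists_compact hX (t := t) (by linarith) htd h
  have hKu : Hc t (univ : Set K) ≠ 0 := fun h0 =>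
    hKt (le_antisymm (h0 ▸ Hc_subtype (by linarith) K) zero_le)
  haveI : CompactSpace K := isCompact_iff_compactSpace.1 hK
  obtain ⟨μ, hfin, hne, hμ⟩ := frostman (δ := t - t') (sub_pos.2 ht't) hKu
  have hE : MeasurableEmbedding (Subtype.val : K → Z) :=
    MeasurableEmbedding.subtype_coe hK.isClosed.measurableSet
  have hpre : (Subtype.val : K → Z) ⁻¹' X = univ := by
    ext x; simp [hKX x.2]
  refine ⟨μ.map Subtype.val, ?_, ?_, ?_, ?_⟩
  · rw [hE.map_apply, Set.preimage_compl, hpre]; simp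
  · rw [hE.map_apply, hpre]; exact pos_iff_ne_zero.2 hne
  · rw [hE.map_apply]; exact measure_lt_top _ _
  · have h1 : energy s (μ.map Subtype.val) = energy s μ := by
      unfold energy
      rw [hE.lintegral_map]
      refine lintegral_congr fun x => ?_
      rw [hE.lintegral_map]
      rfl
    rw [h1]
    refine energy_lt_top μ hs hst' fun z k => ?_
    have := hμ z k
    rwa [sub_sub_cancel] at this

lemma hausdorff_zero {Z : Type*} [MetricSpace Z] [MeasurableSpace Z] [BorelSpace Z] {A : Set Z}
    {d : ℝ} (hd : 0 < d) (h : Hc d A = 0) : Measure.hausdorffMeasure d A = 0 := by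
  have hc : ∀ n, ∃ (F : ℕ → Set Z) (κ : ℕ → ℕ), A ⊆ ⋃ i, F i ∧ (∀ i, ediam (F i) ≤ rr (κ i)) ∧
      ∑' i, rr (κ i) ^ d < rr n ^ d := fun n =>
    exists_cover hd (h.trans_lt (pos_iff_ne_zero.2 (rr_rpow_ne_zero n d)))
  choose F κ hcov hdi hsum using hc
  have hrr : Tendsto rr atTop (𝓝 0) := by simpa using rr_rpow_tendsto one_pos
  have h1 := Measure.hausdorffMeasure_le_liminf_tsum d A (l := atTop) rr hrr F
    (Eventually.of_forall fun n i => (hdi n i).trans (by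
      have := (ENNReal.le_tsum (f := fun i => rr (κ n i) ^ d) i).trans (hsum n).le
      exact (ENNReal.rpow_le_rpow_iff hd).1 this))
    (Eventually.of_forall fun n => hcov n)
  refine le_antisymm (h1.trans ?_) zero_le
  rw [← (rr_rpow_tendsto hd).liminf_eq]
  refine liminf_le_liminf (Eventually.of_forall fun n => ?_)
  refine le_trans (ENNReal.tsum_le_tsum fun i => ?_) (hsum n).le
  exact ENNReal.rpow_le_rpow (hdi n i) hd.le

lemma le_dimH_of_energy {Z : Type*} [MetricSpace Z] [SecondCountableTopology Z]
    [MeasurableSpace Z] [BorelSpace Z] {X : Set Z} {s : ℝ} (hs : 0 < s) (μ : Measure Z)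
    (h0 : μ Xᶜ = 0) (hpos : 0 < μ X) (hfin : μ X < ⊤) (hen : energy s μ < ⊤) :
    ENNReal.ofReal s ≤ dimH X := by
  haveI : IsFiniteMeasure μ := ⟨by
    rw [← Set.union_compl_self X]
    refine (measure_union_le _ _).trans_lt ?_
    rw [h0, add_zero]; exact hfin⟩
  let u : Z → ℝ≥0∞ := fun x => ∫⁻ y, edist x y ^ (-s) ∂μ
  have hm : Measurable fun p : Z × Z => edist p.1 p.2 ^ (-s) :=
    (measurable_fst.edist measurable_snd).pow_const _
  have hu : Measurable u := hm.lintegral_prod_right'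
  have hae : ∀ᵐ x ∂μ, u x < ⊤ := ae_lt_top hu hen.ne
  let A : ℕ → Set Z := fun M => {x | u x ≤ M}
  have hA : ∀ M, MeasurableSet (A M) := fun M => measurableSet_le hu measurable_const
  have hex : ∃ M, μ (A M) ≠ 0 := by
    by_contra hcon
    push Not at hcon
    have h1 : μ (⋃ M, A M) = 0 := measure_iUnion_null hcon
    have h2 : μ (⋃ M, A M)ᶜ = 0 := by
      refine measure_mono_null (fun x hx => ?_) hae
      intro hlt
      obtain ⟨n, hn⟩ := ENNReal.exists_nat_gt (ne_of_lt hlt)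
      exact hx (Set.mem_iUnion.2 ⟨n, hn.le⟩)
    have h3 : μ univ = 0 := by
      rw [← Set.union_compl_self (⋃ M, A M)]
      exact measure_union_null h1 h2
    exact hpos.ne' (measure_mono_null (Set.subset_univ X) h3)
  obtain ⟨M, hM⟩ := hex
  let ν : Measure Z := ((M : ℝ≥0∞) + 1)⁻¹ • μ.restrict (A M)
  have hM1 : (M : ℝ≥0∞) + 1 ≠ 0 := by simp
  have hM2 : (M : ℝ≥0∞) + 1 ≠ ⊤ := by simp
  have hν : ∀ S, ν S = ((M : ℝ≥0∞) + 1)⁻¹ * μ (S ∩ A M) := by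
    intro S
    simp only [ν, Measure.smul_apply, smul_eq_mul, Measure.restrict_apply' (hA M)]
  have hle : ν ≤ Measure.hausdorffMeasure s := by
    refine Measure.le_hausdorffMeasure s ν 1 one_pos fun S hS => ?_
    rw [hν]
    rcases (S ∩ A M).eq_empty_or_nonempty with he | ⟨x, hxS, hxA⟩
    · rw [he]; simp
    have hb : ediam S ^ (-s) * μ (S ∩ A M) ≤ M := by
      refine le_trans ?_ hxA
      refine le_trans ?_ (mul_meas_ge_le_lintegral (hm.comp measurable_prodMk_left) (ediam S ^ (-s)))
      refine mul_le_mul_right (measure_mono fun y hy => ?_) _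
      change ediam S ^ (-s) ≤ edist x y ^ (-s)
      rw [ENNReal.rpow_neg, ENNReal.rpow_neg]
      exact ENNReal.inv_le_inv.2 (ENNReal.rpow_le_rpow (edist_le_ediam_of_mem hxS hy.1) hs.le)
    have hSt : ediam S ≠ ⊤ := (hS.trans_lt ENNReal.one_lt_top).ne
    rw [ENNReal.inv_mul_le_iff hM1 hM2]
    rcases eq_or_ne (ediam S) 0 with hz | hz
    · have : μ (S ∩ A M) = 0 := by
        by_contra hne
        rw [hz, ENNReal.zero_rpow_of_neg (by linarith), ENNReal.top_mul hne] at hb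
        exact absurd (top_le_iff.1 hb) (by simp)
      rw [this]; exact zero_le
    · rw [ENNReal.rpow_neg, ENNReal.inv_mul_le_iff] at hb
      · refine hb.trans ?_
        rw [mul_comm]
        gcongr
        exact le_self_add
      · simp [ENNReal.rpow_eq_zero_iff, hz, hSt]
      · simp [ENNReal.rpow_eq_top_iff, hz, hSt]
  have hs' : ((s.toNNReal : ℝ≥0) : ℝ) = s := Real.coe_toNNReal s hs.le
  have : Measure.hausdorffMeasure ((s.toNNReal : ℝ≥0) : ℝ) X ≠ 0 := by
    rw [hs']
    intro hz
    have h1 : ν X = 0 := le_antisymm ((hle X).trans hz.le) zero_le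
    rw [hν, mul_eq_zero] at h1
    rcases h1 with h1 | h1
    · exact hM2 (ENNReal.inv_eq_zero.1 h1)
    · refine hM (measure_mono_null (t := (X ∩ A M) ∪ Xᶜ) (fun x hx => ?_) (measure_union_null h1 h0))
      by_cases hxX : x ∈ X
      · exact Or.inl ⟨hxX, hx⟩
      · exact Or.inr hxX
  exact le_dimH_of_hausdorffMeasure_ne_zero this

end EnergyDim

theorem dimH_eq_iSup_energy {Z : Type*}
    [MetricSpace Z] [CompleteSpace Z] [TopologicalSpace.SeparableSpace Z]
    [MeasurableSpace Z] [BorelSpace Z]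
    (X : Set Z) (hX : MeasureTheory.AnalyticSet X) :
    dimH X = ⨆ (s : ℝ) (_ : 0 < s)
        (_ : ∃ μ : Measure Z, μ Xᶜ = 0 ∧ 0 < μ X ∧ μ X < ⊤ ∧ energy s μ < ⊤),
      ENNReal.ofReal s := by
  haveI : SecondCountableTopology Z := UniformSpace.secondCountable_of_separable Z
  refine le_antisymm ?_ ?_
  · refine ENNReal.le_of_forall_nnreal_lt fun r hr => ?_
    rcases eq_or_ne r 0 with rfl | hr0
    · exact zero_le
    obtain ⟨d, hrd, hd⟩ := ENNReal.lt_iff_exists_nnreal_btwn.1 hr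
    have hr0' : (0 : ℝ) < r := NNReal.coe_pos.2 (pos_iff_ne_zero.2 hr0)
    have hrd' : (r : ℝ) < d := NNReal.coe_lt_coe.2 (ENNReal.coe_lt_coe.1 hrd)
    have hH : EnergyDim.Hc (d : ℝ) X ≠ 0 := by
      intro h0
      have h1 := EnergyDim.hausdorff_zero (hr0'.trans hrd') h0
      rw [hausdorffMeasure_of_lt_dimH hd] at h1
      exact ENNReal.top_ne_zero h1
    have hex := EnergyDim.exists_measure hX hr0' hrd' hH
    refine le_trans (le_of_eq ?_) (le_iSup₂_of_le (r : ℝ) hr0' (le_iSup_of_le hex le_rfl))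
    rw [ENNReal.ofReal_coe_nnreal]
  · refine iSup₂_le fun s hs => iSup_le ?_
    rintro ⟨μ, h0, hpos, hfin, hen⟩
    exact EnergyDim.le_dimH_of_energy hs μ h0 hpos hfin hen
end
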